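/- arXiv:1603.06444 — 2 statements merged into one kernel-verified Lean document; each statement's English description precedes it below -/
import Mathlib

section
/- Let f(x) ∈ ℚ[x] be a polynomial of degree d with f(ℤ) ⊆ ℤ, and let m_0, …, m_d be its Macaulay parameters, i.e., the unique integers with f(x) = Σ_{i=0}^{d} ( binom(x+i, i+1) − binom(x+i−m_i, i+1) ). Then f(x) is a Hilbert polynomial if and only if m_0 ≥ m_1 ≥ ⋯ ≥ m_d ≥ 0. -/
open Polynomial

/-- A polynomial `f ∈ ℚ[x]` is a *Hilbert polynomial* if there exist a field `k`,
a standard graded `k`-algebra `R` (a commutative `ℕ`-graded `k`-algebra with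
finite-dimensional graded pieces, generated as a `k`-algebra by its degree-one part)
and an `N₀` such that `dim_k R_i = f(i)` for all `i ≥ N₀`. -/
def IsHilbertPolynomial (f : Polynomial ℚ) : Prop :=
  ∃ (k : Type) (R : Type) (_ : Field k) (_ : CommRing R) (_ : Algebra k R)
    (𝒜 : ℕ → Submodule k R) (_ : GradedAlgebra 𝒜),
    (∀ i : ℕ, FiniteDimensional k (𝒜 i)) ∧
    Algebra.adjoin k ((𝒜 1 : Submodule k R) : Set R) = ⊤ ∧
    ∃ N₀ : ℕ, ∀ i : ℕ, N₀ ≤ i → (Module.finrank k (𝒜 i) : ℚ) = f.eval (i : ℚ)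

/-- The binomial coefficient polynomial `binom(y, j) = y(y-1)⋯(y-j+1)/j!` in `ℚ[x]`. -/
noncomputable def binomPoly (j : ℕ) : Polynomial ℚ :=
  Polynomial.C ((j.factorial : ℚ)⁻¹) * descPochhammer ℚ j

/-!
Let a standard graded algebra have the given Hilbert polynomial. After extension of scalars to an
infinite field, write it as a quotient by an ideal and saturate the ideal, which changes only
finitely many graded pieces; some linear form is then regular on the quotient. Cutting by this form
replaces the parameters `m 0, m 1, m 2, …` by `m 1, m 2, …`, and the Hilbert function is recovered
from that of the section by summation. Induction on the number of parameters shows that they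
decrease, together with Macaulay's lower bound for the Hilbert function and Gotzmann's persistence
of equality in it; the latter two are what makes the induction work.

Conversely, let `m 0 ≥ m 1 ≥ ⋯ ≥ m n = 0` and let `ε` be the exponent with `ε 0 = 0` and
`ε (i + 1) = m i - m (i + 1)`. The exponents which are colexicographically smaller than `ε` are
closed under passing to divisors, so they are the basis of the quotient by a monomial ideal.
Sorting them by the last entry at which they differ from `ε` gives its Hilbert function.
-/

section MacaulayPolynomial

theorem binomPoly_eval (k : ℕ) (y : ℚ) : (binomPoly k).eval y = Ring.choose y k := by
  rw [Ring.choose_eq_smul, ← aeval_eq_smeval, binomPoly,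
    ← descPochhammer_map (algebraMap ℤ ℚ), eval_C_mul, eval_map_algebraMap, smul_eq_mul]

/-- The polynomial with Macaulay parameters `m 0, …, m (n - 1)`; the sequence `m` is indexed by
all of `ℕ` so that the parameters can be shifted, and `n` is one more than the degree. -/
noncomputable def macaulayPolynomial (n : ℕ) (m : ℕ → ℤ) : ℚ[X] :=
  ∑ i ∈ Finset.range n, ((binomPoly (i + 1)).comp (X + C (i : ℚ))
    - (binomPoly (i + 1)).comp (X + C (i : ℚ) - C (m i : ℚ)))

/-- The values of `macaulayPolynomial n m` at the integers, expressed without denominators. -/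
noncomputable def macaulaySum (n : ℕ) (m : ℕ → ℤ) (x : ℤ) : ℤ :=
  ∑ i ∈ Finset.range n, (Ring.choose (x + i) (i + 1) - Ring.choose (x + i - m i) (i + 1))

theorem macaulayPolynomial_eval (n : ℕ) (m : ℕ → ℤ) (x : ℤ) :
    (macaulayPolynomial n m).eval (x : ℚ) = macaulaySum n m x := by
  have cast_choose (y : ℤ) (k : ℕ) : ((Ring.choose y k : ℤ) : ℚ) = Ring.choose (y : ℚ) k :=
    Ring.map_choose (Int.castRingHom ℚ) y k
  simp [macaulayPolynomial, macaulaySum, eval_finsetSum, binomPoly_eval, cast_choose]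

theorem macaulaySum_succ_sub_macaulaySum (n : ℕ) (m : ℕ → ℤ) (x : ℤ) :
    macaulaySum (n + 1) m (x + 1) - macaulaySum (n + 1) m x
      = macaulaySum n (fun i => m (i + 1)) (x + 1) := by
  have term (i : ℕ) : Ring.choose (x + 1 + i) (i + 1) - Ring.choose (x + 1 + i - m i) (i + 1)
      - (Ring.choose (x + i) (i + 1) - Ring.choose (x + i - m i) (i + 1))
        = Ring.choose (x + i) i - Ring.choose (x + i - m i) i := by
    rw [add_right_comm x, add_sub_right_comm _ 1, Ring.choose_succ_succ, Ring.choose_succ_succ]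
    ring
  rw [macaulaySum, macaulaySum, ← Finset.sum_sub_distrib]
  simp only [term, Finset.sum_range_succ', Ring.choose_zero_right, sub_self, add_zero]
  refine Finset.sum_congr rfl fun i _ => ?_
  rw [Nat.cast_succ, add_comm (i : ℤ) 1, add_assoc]

/-- The number of monomials of degree `j - c` in `k + 1` variables, for `0 < k`. It vanishes
for `j < c` because `Int.toNat` truncates. -/
def coneHilbert (k : ℕ) (c : ℤ) (j : ℕ) : ℤ :=
  ((j + k - c).toNat.choose k : ℕ)

theorem coneHilbert_one (c : ℤ) (j : ℕ) : coneHilbert 1 c j = ((j : ℤ) + 1 - c).toNat := by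
  simp [coneHilbert]

theorem coneHilbert_eq_choose {k : ℕ} {c : ℤ} {j : ℕ} (h : c ≤ j + k) :
    coneHilbert k c j = Ring.choose ((j : ℤ) + k - c) k := by
  rw [coneHilbert, ← Ring.choose_natCast, Int.toNat_of_nonneg (by omega)]

theorem coneHilbert_succ_succ (k : ℕ) (c : ℤ) (j : ℕ) :
    coneHilbert (k + 2) c (j + 1) = coneHilbert (k + 1) c (j + 1) + coneHilbert (k + 2) c j := by
  simp only [coneHilbert]
  norm_cast
  rcases le_or_gt c (j + k + 2) with h | h
  · rw [show (((j + 1 + (k + 2) : ℕ) : ℤ) - c).toNat = (j + k + 2 - c).toNat + 1 by omega,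
      show (((j + 1 + (k + 1) : ℕ) : ℤ) - c).toNat = (j + k + 2 - c).toNat by omega,
      show (((j + (k + 2) : ℕ) : ℤ) - c).toNat = (j + k + 2 - c).toNat by omega,
      Nat.choose_succ_succ]
  · rw [Nat.choose_eq_zero_of_lt (by omega), Nat.choose_eq_zero_of_lt (by omega),
      Nat.choose_eq_zero_of_lt (by omega)]

theorem sum_range_coneHilbert (k : ℕ) {c : ℤ} (hc : 0 ≤ c) (j : ℕ) :
    ∑ t ∈ Finset.range (j + 1), coneHilbert (k + 1) c t = coneHilbert (k + 2) c j := by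
  induction j with
  | zero =>
    rcases hc.eq_or_lt with rfl | hc
    · simp only [coneHilbert, zero_add, Finset.sum_range_one, sub_zero, Nat.cast_zero,
        Int.toNat_natCast, Nat.choose_self]
    · simp only [coneHilbert, zero_add, Finset.sum_range_one]
      rw [Nat.choose_eq_zero_of_lt (by omega), Nat.choose_eq_zero_of_lt (by omega)]
  | succ j ih => rw [Finset.sum_range_succ, ih, coneHilbert_succ_succ, add_comm]

/-- The Hilbert function of the quotient by the lexicographic ideal with Macaulay parameters
`m 0 ≥ ⋯ ≥ m (n - 1)`, where `m n = 0`. -/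
def lexHilbert (n : ℕ) (m : ℕ → ℤ) (j : ℕ) : ℤ :=
  ∑ i ∈ Finset.range n, (coneHilbert (i + 1) (m (i + 1)) j - coneHilbert (i + 1) (m i) j)

theorem lexHilbert_succ (n : ℕ) {m : ℕ → ℤ} (hm : ∀ i, 0 ≤ m (i + 1)) (j : ℕ) :
    lexHilbert (n + 1) m j = ∑ t ∈ Finset.range (j + 1), lexHilbert n (fun i => m (i + 1)) t
      + (((j : ℤ) + 1 - m 1).toNat - ((j : ℤ) + 1 - m 0).toNat) := by
  simp only [lexHilbert]
  rw [Finset.sum_range_succ', Finset.sum_comm]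
  simp only [Finset.sum_sub_distrib, sum_range_coneHilbert _ (hm _), zero_add, coneHilbert_one]

theorem sum_range_choose_sub_choose (n : ℕ) (m : ℕ → ℤ) (x : ℤ) :
    ∑ i ∈ Finset.range n, (Ring.choose (x + i + 1 - m (i + 1)) (i + 1)
        - Ring.choose (x + i + 1 - m i) (i + 1))
      = macaulaySum n m x + (Ring.choose (x + n - m n) n - Ring.choose (x + n) n) := by
  induction n with
  | zero => simp [macaulaySum]
  | succ n ih =>
    have last : macaulaySum (n + 1) m x
        = macaulaySum n m x + (Ring.choose (x + n) (n + 1) - Ring.choose (x + n - m n) (n + 1)) :=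
      Finset.sum_range_succ _ _
    rw [Finset.sum_range_succ, ih, last, Nat.cast_succ, ← add_assoc x, add_sub_right_comm _ 1 (m n),
      Ring.choose_succ_succ (x + n), Ring.choose_succ_succ (x + n - m n)]
    ring

theorem lexHilbert_eq_macaulaySum {n : ℕ} {m : ℕ → ℤ} (hn : m n = 0) {j : ℕ}
    (hm : ∀ i, m i ≤ j + 1) : lexHilbert n m j = macaulaySum n m j := by
  have h := sum_range_choose_sub_choose n m j
  rw [hn, sub_zero, sub_self, add_zero] at h
  rw [← h]
  refine Finset.sum_congr rfl fun i _ => ?_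
  rw [coneHilbert_eq_choose (by have := hm (i + 1); push_cast; omega),
    coneHilbert_eq_choose (by have := hm i; push_cast; omega), Nat.cast_succ, ← add_assoc]

end MacaulayPolynomial

section PartialSums

variable {g : ℕ → ℤ} {a b : ℤ}

theorem toNat_sub_le_sum_range (hg : ∀ i, 0 ≤ g i) (ha : 0 ≤ a) {N : ℕ}
    (hne : ∀ i < N, a ≤ i → g i ≠ 0) : ((N - a).toNat : ℤ) ≤ ∑ i ∈ Finset.range N, g i :=
  calc ((N - a).toNat : ℤ)
      = ∑ i ∈ Finset.Ico a.toNat N, 1 := by simp; omega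
    _ ≤ ∑ i ∈ Finset.Ico a.toNat N, g i := by
        refine Finset.sum_le_sum fun i hi => ?_
        rw [Finset.mem_Ico] at hi
        have := hne i hi.2 (by omega)
        have := hg i
        omega
    _ ≤ ∑ i ∈ Finset.range N, g i :=
        Finset.sum_le_sum_of_subset_of_nonneg
          (fun i hi => Finset.mem_range.mpr (Finset.mem_Ico.mp hi).2) fun i _ _ => hg i

theorem toNat_sub_toNat_le_sum_range (hg : ∀ i, 0 ≤ g i) (ha : 0 ≤ a)
    (hpers : ∀ j : ℕ, a ≤ j → g j = 0 → ∀ i, j ≤ i → g i = 0) {N₀ : ℕ}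
    (hsum : ∀ N, N₀ ≤ N → ∑ i ∈ Finset.range N, g i = b - a) (N : ℕ) :
    ((N - a).toNat : ℤ) - (N - b).toNat ≤ ∑ i ∈ Finset.range N, g i := by
  by_cases hne : ∀ i < N, a ≤ i → g i ≠ 0
  · have := toNat_sub_le_sum_range hg ha hne
    omega
  · push Not at hne
    obtain ⟨i, hi, hai, hgi⟩ := hne
    have stable : ∑ t ∈ Finset.range N, g t = b - a := by
      rw [← hsum (max N N₀) (le_max_right _ _)]
      exact (Finset.eventually_constant_sum (fun t ht => hpers i hai hgi t (by omega))
        (le_max_left _ _)).symm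
    omega

theorem exists_eq_zero_of_sum_range_eq (hg : ∀ i, 0 ≤ g i) (ha : 0 ≤ a) {N : ℕ} (hbN : b < N)
    (hsum : ∑ i ∈ Finset.range N, g i = b - a) : ∃ i < N, a ≤ i ∧ g i = 0 := by
  by_contra! hne
  have := toNat_sub_le_sum_range hg ha hne
  omega

end PartialSums

theorem finrank_map_add_inf_ker {K M N : Type*} [Field K] [AddCommGroup M] [Module K M]
    [AddCommGroup N] [Module K N] (g : M →ₗ[K] N) (p : Submodule K M) [FiniteDimensional K p] :
    Module.finrank K (p.map g) + Module.finrank K (p ⊓ LinearMap.ker g : Submodule K M)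
      = Module.finrank K p := by
  have ker_domRestrict : LinearMap.ker (g.domRestrict p) = (LinearMap.ker g).comap p.subtype := rfl
  rw [← LinearMap.finrank_range_add_finrank_ker (g.domRestrict p), LinearMap.range_domRestrict,
    ker_domRestrict, ← Submodule.map_comap_subtype, Submodule.finrank_map_subtype_eq]

section GradedIdeal

variable {K R : Type*} [Field K] [CommRing R] [Algebra K R] (A : ℕ → Submodule K R)

section Decomposition

variable [GradedAlgebra A]

theorem mul_le_graded (i j : ℕ) : A i * A j ≤ A (i + j) :=
  Submodule.mul_le.mpr fun _ hx _ hy => SetLike.mul_mem_graded hx hy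

theorem pow_le_graded (i : ℕ) : A 1 ^ i ≤ A i := by
  induction i with
  | zero => exact Submodule.one_le.mpr SetLike.GradedOne.one_mem
  | succ i ih => exact (mul_le_mul_left ih _).trans (mul_le_graded A i 1)

theorem decompose_mem_pow (hgen : Algebra.adjoin K (A 1 : Set R) = ⊤) (x : R) (i : ℕ) :
    (DirectSum.decompose A x i : R) ∈ A 1 ^ i := by
  classical
  have hx : x ∈ Algebra.adjoin K (A 1 : Set R) := hgen ▸ Algebra.mem_top
  induction hx using Algebra.adjoin_induction generalizing i with
  | mem x hx =>
    obtain rfl | hi := eq_or_ne i 1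
    · rwa [DirectSum.decompose_of_mem_same A hx, pow_one]
    · rw [DirectSum.decompose_of_mem_ne A hx hi.symm]
      exact zero_mem _
  | algebraMap r =>
    have hr := SetLike.algebraMap_mem_graded A r
    obtain rfl | hi := eq_or_ne i 0
    · rw [DirectSum.decompose_of_mem_same A hr, pow_zero]
      exact Submodule.algebraMap_mem r
    · rw [DirectSum.decompose_of_mem_ne A hr hi.symm]
      exact zero_mem _
  | add x y _ _ hx hy =>
    rw [DirectSum.decompose_add]
    exact add_mem (hx i) (hy i)
  | mul x y _ _ hx hy =>
    rw [DirectSum.decompose_mul, DirectSum.coe_mul_apply]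
    refine Submodule.sum_mem _ fun ab hab => ?_
    rw [← (Finset.mem_filter.mp hab).2, pow_add]
    exact Submodule.mul_mem_mul (hx _) (hy _)

theorem graded_succ_le_mul (hgen : Algebra.adjoin K (A 1 : Set R) = ⊤) (i : ℕ) :
    A (i + 1) ≤ A 1 * A i := by
  intro x hx
  have hx' := decompose_mem_pow A hgen x (i + 1)
  rw [DirectSum.decompose_of_mem_same A hx, pow_succ'] at hx'
  exact mul_le_mul_right (pow_le_graded A i) _ hx'

end Decomposition

/-- The degree `j` part of an ideal `I` of the graded algebra `A`. -/
def gradedPart (I : Ideal R) (j : ℕ) : Submodule K R := A j ⊓ I.restrictScalars K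

/-- The degree `j` part of the quotient of the graded algebra `A` by an ideal `I`. -/
def quotientGrading (I : Ideal R) (j : ℕ) : Submodule K (R ⧸ I) :=
  (A j).map (Ideal.Quotient.mkₐ K I).toLinearMap

/-- The Hilbert function of the quotient of the graded algebra `A` by an ideal `I`; it is
integer-valued so that it can be subtracted. -/
noncomputable def hilbertFunction (I : Ideal R) (j : ℕ) : ℤ :=
  Module.finrank K (quotientGrading A I j)

variable {I I' : Ideal R} {j : ℕ}

theorem gradedPart_mono (h : I ≤ I') (j : ℕ) : gradedPart A I j ≤ gradedPart A I' j :=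
  inf_le_inf_left _ h

theorem mul_gradedPart_le (V : Submodule K R) (I : Ideal R) (j : ℕ) :
    V * gradedPart A I j ≤ I.restrictScalars K :=
  Submodule.mul_le.mpr fun v _ _ hx => I.mul_mem_left v hx.2

theorem gradedPart_succ_eq_of_le_mul (hle : I ≤ I') (heq : gradedPart A I j = gradedPart A I' j)
    (hgen : gradedPart A I' (j + 1) ≤ A 1 * gradedPart A I' j) :
    gradedPart A I (j + 1) = gradedPart A I' (j + 1) :=
  le_antisymm (gradedPart_mono A hle _) fun _ hx =>
    ⟨hx.1, mul_gradedPart_le A _ I j (heq ▸ hgen hx)⟩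

section HilbertFunction

theorem ker_mkₐ_toLinearMap (I : Ideal R) :
    LinearMap.ker (Ideal.Quotient.mkₐ K I).toLinearMap = I.restrictScalars K :=
  Submodule.ext fun _ => Ideal.Quotient.eq_zero_iff_mem

theorem hilbertFunction_top (j : ℕ) : hilbertFunction A ⊤ j = 0 := by
  rw [hilbertFunction, Submodule.eq_bot_of_subsingleton (p := quotientGrading A ⊤ j), finrank_bot,
    Nat.cast_zero]

variable [∀ i, FiniteDimensional K (A i)]

theorem hilbertFunction_add_finrank_gradedPart (I : Ideal R) (j : ℕ) :
    hilbertFunction A I j + Module.finrank K (gradedPart A I j) = Module.finrank K (A j) := by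
  rw [hilbertFunction, quotientGrading, gradedPart, ← ker_mkₐ_toLinearMap]
  exact_mod_cast finrank_map_add_inf_ker (Ideal.Quotient.mkₐ K I).toLinearMap (A j)

theorem hilbertFunction_bot (j : ℕ) : hilbertFunction A ⊥ j = Module.finrank K (A j) := by
  have h := hilbertFunction_add_finrank_gradedPart A ⊥ j
  rwa [gradedPart, Submodule.restrictScalars_bot, inf_bot_eq, finrank_bot, Nat.cast_zero,
    add_zero] at h

theorem hilbertFunction_congr (h : gradedPart A I j = gradedPart A I' j) :
    hilbertFunction A I j = hilbertFunction A I' j := by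
  have hI := hilbertFunction_add_finrank_gradedPart A I j
  rw [h, ← hilbertFunction_add_finrank_gradedPart A I' j] at hI
  exact add_right_cancel hI

instance finiteDimensional_gradedPart (I : Ideal R) (j : ℕ) :
    FiniteDimensional K (gradedPart A I j) :=
  Submodule.finiteDimensional_of_le inf_le_left

theorem hilbertFunction_antitone : Antitone (hilbertFunction A) := fun I I' h j => by
  have := Submodule.finrank_mono (gradedPart_mono A h j)
  have := hilbertFunction_add_finrank_gradedPart A I j
  have := hilbertFunction_add_finrank_gradedPart A I' j
  change hilbertFunction A I' j ≤ hilbertFunction A I j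
  omega

theorem gradedPart_eq_of_hilbertFunction_eq (h : I ≤ I')
    (e : hilbertFunction A I j = hilbertFunction A I' j) :
    gradedPart A I j = gradedPart A I' j := by
  have := hilbertFunction_add_finrank_gradedPart A I j
  have := hilbertFunction_add_finrank_gradedPart A I' j
  exact Submodule.eq_of_le_of_finrank_eq (gradedPart_mono A h j) (by omega)

end HilbertFunction

section HyperplaneSection

variable [GradedAlgebra A] {d : ℕ} {l : R}

theorem isHomogeneous_sup_span_singleton (hI : I.IsHomogeneous A) (hl : l ∈ A d) :
    (I ⊔ Ideal.span {l}).IsHomogeneous A :=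
  hI.sup (Ideal.homogeneous_span A _ fun _ hx => ⟨d, Set.mem_singleton_iff.mp hx ▸ hl⟩)

theorem gradedPart_sup_span_singleton_add (hI : I.IsHomogeneous A) (hl : l ∈ A d) (j : ℕ) :
    gradedPart A (I ⊔ Ideal.span {l}) (j + d)
      = gradedPart A I (j + d) ⊔ (A j).map (LinearMap.mulLeft K l) := by
  refine le_antisymm (fun x hx => ?_) (sup_le (gradedPart_mono A le_sup_left _) ?_)
  · obtain ⟨a, ha, b, hb, hab⟩ := Submodule.mem_sup.mp hx.2
    obtain ⟨s, rfl⟩ := Ideal.mem_span_singleton.mp hb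
    refine Submodule.mem_sup.mpr ⟨DirectSum.decompose A a (j + d), ⟨Subtype.mem _, hI _ ha⟩,
      l * DirectSum.decompose A s j, ⟨_, Subtype.mem _, rfl⟩, ?_⟩
    rw [← DirectSum.decompose_of_mem_same A hx.1, ← hab, DirectSum.decompose_add, mul_comm l,
      mul_comm l, ← DirectSum.coe_decompose_mul_add_of_right_mem A hl]
    rfl
  · rintro _ ⟨b, hb, rfl⟩
    refine ⟨?_, Ideal.mem_sup_right (Ideal.mul_mem_right b _ (Ideal.mem_span_singleton_self l))⟩
    rw [add_comm]
    exact SetLike.mul_mem_graded hl hb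

theorem gradedPart_sup_span_singleton_of_lt (hI : I.IsHomogeneous A) (hl : l ∈ A d) (hj : j < d) :
    gradedPart A (I ⊔ Ideal.span {l}) j = gradedPart A I j := by
  refine le_antisymm (fun x hx => ⟨hx.1, ?_⟩) (gradedPart_mono A le_sup_left _)
  obtain ⟨a, ha, b, hb, hab⟩ := Submodule.mem_sup.mp hx.2
  obtain ⟨s, rfl⟩ := Ideal.mem_span_singleton'.mp hb
  have x_eq : x = DirectSum.decompose A a j := by
    rw [← DirectSum.decompose_of_mem_same A hx.1, ← hab, DirectSum.decompose_add,
      DirectSum.add_apply, Submodule.coe_add,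
      DirectSum.coe_decompose_mul_of_right_mem_of_not_le A hl hj.not_ge, add_zero]
  exact x_eq ▸ hI j ha

theorem mul_mem_iff_of_isSMulRegular (hreg : IsSMulRegular (R ⧸ I) l) {x : R} :
    l * x ∈ I ↔ x ∈ I :=
  ⟨fun h => (isSMulRegular_quotient_iff_mem_of_smul_mem I l).mp hreg x h, I.mul_mem_left l⟩

theorem gradedPart_succ_le_mul_of_sup_span_singleton (hI : I.IsHomogeneous A) (hl : l ∈ A 1)
    (hreg : IsSMulRegular (R ⧸ I) l)
    (h : gradedPart A (I ⊔ Ideal.span {l}) (j + 1) ≤ A 1 * gradedPart A (I ⊔ Ideal.span {l}) j) :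
    gradedPart A I (j + 1) ≤ A 1 * gradedPart A I j := by
  have section_le : A 1 * gradedPart A (I ⊔ Ideal.span {l}) j
      ≤ A 1 * gradedPart A I j ⊔ (A j).map (LinearMap.mulLeft K l) := by
    obtain _ | j := j
    · rw [gradedPart_sup_span_singleton_of_lt A hI hl one_pos]
      exact le_sup_left
    · rw [gradedPart_sup_span_singleton_add A hI hl, Submodule.mul_sup]
      refine sup_le_sup_left (Submodule.mul_le.mpr ?_) _
      rintro v hv _ ⟨b, hb, rfl⟩
      exact ⟨v * b, add_comm 1 j ▸ SetLike.mul_mem_graded hv hb, mul_left_comm l v b⟩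
  intro x hx
  obtain ⟨g, hg, _, ⟨b, hb, rfl⟩, rfl⟩ :=
    Submodule.mem_sup.mp (section_le (h (gradedPart_mono A le_sup_left _ hx)))
  have lb_mem : l * b ∈ I := (I.add_mem_iff_right (mul_gradedPart_le A _ I j hg)).mp hx.2
  exact add_mem hg (Submodule.mul_mem_mul hl ⟨hb, (mul_mem_iff_of_isSMulRegular hreg).mp lb_mem⟩)

variable [∀ i, FiniteDimensional K (A i)]

theorem hilbertFunction_sup_span_singleton_add (hI : I.IsHomogeneous A) (hl : l ∈ A d)
    (hreg : IsSMulRegular (R ⧸ I) l) (j : ℕ) :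
    hilbertFunction A (I ⊔ Ideal.span {l}) (j + d)
      = hilbertFunction A I (j + d) - hilbertFunction A I j := by
  let q := (Ideal.Quotient.mkₐ K I).toLinearMap
  have ker_q : LinearMap.ker q = I.restrictScalars K := ker_mkₐ_toLinearMap I
  have ker_mul : LinearMap.ker (q ∘ₗ LinearMap.mulLeft K l) = I.restrictScalars K := by
    ext x
    rw [LinearMap.ker_comp, ker_q]
    exact mul_mem_iff_of_isSMulRegular hreg
  have kernel_part : gradedPart A (I ⊔ Ideal.span {l}) (j + d) ⊓ LinearMap.ker q
      = gradedPart A I (j + d) := by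
    rw [ker_q, gradedPart, inf_assoc, ← Submodule.restrictScalars_inf,
      inf_eq_right.mpr (le_sup_left : I ≤ I ⊔ Ideal.span {l}), gradedPart]
  have image_eq : (gradedPart A (I ⊔ Ideal.span {l}) (j + d)).map q
      = (A j).map (q ∘ₗ LinearMap.mulLeft K l) := by
    rw [gradedPart_sup_span_singleton_add A hI hl, Submodule.map_sup, ← Submodule.map_comp,
      LinearMap.le_ker_iff_map.mp (ker_q.symm ▸ inf_le_right : gradedPart A I (j + d) ≤ _),
      bot_sup_eq]
  have dim_section := finrank_map_add_inf_ker q (gradedPart A (I ⊔ Ideal.span {l}) (j + d))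
  have dim_mul := finrank_map_add_inf_ker (q ∘ₗ LinearMap.mulLeft K l) (A j)
  rw [kernel_part, image_eq] at dim_section
  rw [ker_mul] at dim_mul
  have := hilbertFunction_add_finrank_gradedPart A (I ⊔ Ideal.span {l}) (j + d)
  have := hilbertFunction_add_finrank_gradedPart A I (j + d)
  have := hilbertFunction_add_finrank_gradedPart A I j
  unfold gradedPart at *
  omega

theorem hilbertFunction_eq_sum_range (hI : I.IsHomogeneous A) (hl : l ∈ A 1)
    (hreg : IsSMulRegular (R ⧸ I) l) (j : ℕ) :
    hilbertFunction A I j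
      = ∑ t ∈ Finset.range (j + 1), hilbertFunction A (I ⊔ Ideal.span {l}) t := by
  induction j with
  | zero =>
    rw [zero_add, Finset.sum_range_one, hilbertFunction_congr A
      (gradedPart_sup_span_singleton_of_lt A hI hl one_pos)]
  | succ j ih =>
    rw [Finset.sum_range_succ, ← ih, hilbertFunction_sup_span_singleton_add A hI hl hreg,
      add_sub_cancel]

end HyperplaneSection

end GradedIdeal

section Saturation

variable {K R : Type*} [Field K] [CommRing R] [Algebra K R] (A : ℕ → Submodule K R)

/-- An ideal is *saturated* with respect to the irrelevant ideal of the standard graded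
algebra `A` if it contains every element that all linear forms multiply into it. -/
def IsSaturated (I : Ideal R) : Prop := ∀ x, (∀ v ∈ A 1, v * x ∈ I) → x ∈ I

variable {A} {I : Ideal R}

theorem mul_mem_of_mem_graded_succ (hstd : ∀ i, A (i + 1) ≤ A 1 * A i) {x : R}
    (hx : ∀ v ∈ A 1, v * x ∈ I) {i : ℕ} {s : R} (hs : s ∈ A (i + 1)) : s * x ∈ I := by
  refine Submodule.mul_induction_on (hstd i hs) (fun v hv r _ => ?_) fun r s hr hs => ?_
  · rw [mul_right_comm]
    exact I.mul_mem_right r (hx v hv)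
  · rw [add_mul]
    exact add_mem hr hs

variable [GradedAlgebra A]

theorem isSaturated_of_forall_homogeneous (hI : I.IsHomogeneous A)
    (h : ∀ j, ∀ x ∈ A j, (∀ v ∈ A 1, v * x ∈ I) → x ∈ I) : IsSaturated A I := by
  intro x hx
  rw [hI.mem_iff]
  refine fun j => h j _ (Subtype.mem _) fun v hv => ?_
  rw [← DirectSum.coe_decompose_mul_add_of_left_mem A hv]
  exact hI _ (hx v hv)

theorem gradedPart_sup_span_singleton_le (hstd : ∀ i, A (i + 1) ≤ A 1 * A i)
    (hI : I.IsHomogeneous A) {d : ℕ} {x : R} (hxd : x ∈ A d) (hx : ∀ v ∈ A 1, v * x ∈ I)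
    {j : ℕ} (hj : d < j) : gradedPart A (I ⊔ Ideal.span {x}) j ≤ gradedPart A I j := by
  obtain ⟨i, rfl⟩ := Nat.exists_eq_add_of_lt hj
  rw [add_assoc, add_comm, gradedPart_sup_span_singleton_add A hI hxd]
  refine sup_le le_rfl ?_
  rintro _ ⟨s, hs, rfl⟩
  rw [LinearMap.mulLeft_apply, mul_comm]
  exact ⟨SetLike.mul_mem_graded hs hxd, mul_mem_of_mem_graded_succ hstd hx hs⟩

theorem exists_isSaturated [IsNoetherianRing R] (hstd : ∀ i, A (i + 1) ≤ A 1 * A i)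
    (hI : I.IsHomogeneous A) :
    ∃ I' : Ideal R, I'.IsHomogeneous A ∧ I ≤ I' ∧ IsSaturated A I' ∧
      ∃ N, ∀ j, N ≤ j → gradedPart A I' j = gradedPart A I j := by
  let S : Set (Ideal R) := {I' | I'.IsHomogeneous A ∧ I ≤ I' ∧
    ∃ N, ∀ j, N ≤ j → gradedPart A I' j = gradedPart A I j}
  obtain ⟨I', ⟨hI', hle, N, hN⟩, hmax⟩ := set_has_maximal_iff_noetherian.mpr
    (inferInstanceAs (IsNoetherian R R)) S ⟨I, hI, le_rfl, 0, fun _ _ => rfl⟩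
  refine ⟨I', hI', hle, isSaturated_of_forall_homogeneous hI' fun d x hxd hx => ?_, N, hN⟩
  have mem_S : I' ⊔ Ideal.span {x} ∈ S :=
    ⟨isHomogeneous_sup_span_singleton A hI' hxd, hle.trans le_sup_left, max N (d + 1),
      fun j hj => (gradedPart_sup_span_singleton_le hstd hI' hxd hx (by omega)).antisymm
        (gradedPart_mono A le_sup_left j) |>.trans (hN j (by omega))⟩
  have not_lt := hmax _ mem_S
  rwa [left_lt_sup, not_not, Ideal.span_singleton_le_iff_mem] at not_lt

end Saturation

section Regular

theorem exists_associatedPrime_of_forall_not_isSMulRegular {K R M : Type*} [Field K] [Infinite K]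
    [CommRing R] [IsNoetherianRing R] [Algebra K R] [AddCommGroup M] [Module R M]
    [Module.Finite R M] (V : Submodule K R) (hV : ∀ v ∈ V, ¬ IsSMulRegular M v) :
    ∃ p ∈ associatedPrimes R M, ∀ v ∈ V, v ∈ p := by
  have : Finite (associatedPrimes R M) := associatedPrimes.finite R M
  let trace (p : associatedPrimes R M) : Submodule K V := (p.1.restrictScalars K).comap V.subtype
  have cover : ⋃ p, (trace p : Set V) = Set.univ := by
    refine Set.eq_univ_of_forall fun v => ?_
    have hv : (v : R) ∈ ⋃ p ∈ associatedPrimes R M, (p : Set R) := by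
      rw [biUnion_associatedPrimes_eq_compl_regular]
      exact hV v v.2
    obtain ⟨p, hp, hvp⟩ := Set.mem_iUnion₂.mp hv
    exact Set.mem_iUnion.mpr ⟨⟨p, hp⟩, hvp⟩
  obtain ⟨p, hp⟩ := Subspace.exists_eq_top_of_iUnion_eq_univ cover
  exact ⟨p, p.2, fun v hv => (hp ▸ Submodule.mem_top : (⟨v, hv⟩ : V) ∈ trace p)⟩

theorem exists_isSMulRegular_of_isSaturated {K R : Type*} [Field K] [Infinite K] [CommRing R]
    [IsNoetherianRing R] [Algebra K R] {A : ℕ → Submodule K R} {I : Ideal R}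
    (hI : IsSaturated A I) : ∃ l ∈ A 1, IsSMulRegular (R ⧸ I) l := by
  by_contra! hcon
  obtain ⟨p, hp, hAp⟩ := exists_associatedPrime_of_forall_not_isSMulRegular (A 1) hcon
  obtain ⟨hprime, y, hy⟩ := (isAssociatedPrime_iff).mp hp
  obtain ⟨x, rfl⟩ := Ideal.Quotient.mk_surjective y
  have mem_p_iff (r : R) : r ∈ p ↔ r * x ∈ I := by
    rw [hy, Submodule.mem_colon_singleton, Submodule.mem_bot, Algebra.smul_def,
      Ideal.Quotient.algebraMap_eq, ← map_mul, Ideal.Quotient.eq_zero_iff_mem]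
  have hx : x ∈ I := hI x fun v hv => (mem_p_iff v).mp (hAp v hv)
  exact hprime.ne_top ((Ideal.eq_top_iff_one p).mpr ((mem_p_iff 1).mpr ((one_mul x).symm ▸ hx)))

end Regular

section GotzmannBound

variable {K R : Type*} [Field K] [CommRing R] [Algebra K R] (A : ℕ → Submodule K R)

/-- The conclusions of the theorems of Macaulay and Gotzmann for a quotient with Macaulay
parameters `m 0, …, m (n - 1)`: the parameters decrease, the Hilbert function is bounded below
by that of the lexicographic ideal, and once this bound is attained in some degree `j ≥ m 0`, it
is attained in all later degrees and the ideal has no new generators there. -/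
structure GotzmannBound (n : ℕ) (m : ℕ → ℤ) (I : Ideal R) : Prop where
  succ_le : ∀ i, m (i + 1) ≤ m i
  lexHilbert_le : ∀ j, lexHilbert n m j ≤ hilbertFunction A I j
  persistence : ∀ j : ℕ, m 0 ≤ j → hilbertFunction A I j = lexHilbert n m j → ∀ i, j ≤ i →
    gradedPart A I (i + 1) ≤ A 1 * gradedPart A I i ∧ hilbertFunction A I i = lexHilbert n m i

variable {A} {n : ℕ} {m : ℕ → ℤ} {I I' : Ideal R}

theorem gotzmannBound_top (hstd : ∀ i, A (i + 1) ≤ A 1 * A i) (hm : ∀ i, m i = 0) :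
    GotzmannBound A 0 m (⊤ : Ideal R) where
  succ_le i := by rw [hm, hm]
  lexHilbert_le j := by simp [lexHilbert, hilbertFunction_top]
  persistence j _ _ i _ := by simpa [lexHilbert, hilbertFunction_top, gradedPart] using hstd i

theorem GotzmannBound.of_le [∀ i, FiniteDimensional K (A i)] (h : GotzmannBound A n m I')
    (hle : I ≤ I') : GotzmannBound A n m I where
  succ_le := h.succ_le
  lexHilbert_le j := (h.lexHilbert_le j).trans (hilbertFunction_antitone A hle j)
  persistence j hj heq := by
    have anti := hilbertFunction_antitone A hle j
    have heq' : hilbertFunction A I' j = lexHilbert n m j :=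
      le_antisymm (anti.trans heq.le) (h.lexHilbert_le j)
    have persist := h.persistence j hj heq'
    have part_eq (i : ℕ) (hi : j ≤ i) : gradedPart A I i = gradedPart A I' i := by
      induction i, hi using Nat.le_induction with
      | base => exact gradedPart_eq_of_hilbertFunction_eq A hle (heq.trans heq'.symm)
      | succ i hi ih => exact gradedPart_succ_eq_of_le_mul A hle ih (persist i hi).1
    intro i hi
    rw [hilbertFunction_congr A (part_eq i hi), part_eq i hi, part_eq (i + 1) (hi.trans i.le_succ)]
    exact persist i hi

theorem hilbertFunction_sub_lexHilbert [GradedAlgebra A] [∀ i, FiniteDimensional K (A i)]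
    (hI : I.IsHomogeneous A) {l : R} (hl : l ∈ A 1) (hreg : IsSMulRegular (R ⧸ I) l)
    (hm : ∀ i, 0 ≤ m (i + 1)) (j : ℕ) :
    hilbertFunction A I j - lexHilbert (n + 1) m j
      = ∑ t ∈ Finset.range (j + 1),
          (hilbertFunction A (I ⊔ Ideal.span {l}) t - lexHilbert n (fun i => m (i + 1)) t)
        - (((j : ℤ) + 1 - m 1).toNat - ((j : ℤ) + 1 - m 0).toNat) := by
  rw [Finset.sum_sub_distrib, ← hilbertFunction_eq_sum_range A hI hl hreg, lexHilbert_succ n hm]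
  ring

theorem exists_sum_hilbertFunction_sub_lexHilbert_eq [GradedAlgebra A]
    [∀ i, FiniteDimensional K (A i)] (hI : I.IsHomogeneous A) {l : R} (hl : l ∈ A 1)
    (hreg : IsSMulRegular (R ⧸ I) l) (hm : ∀ i, 0 ≤ m (i + 1)) (hn : m (n + 1) = 0)
    (hm1 : ∀ i, m (i + 1) ≤ m 1)
    (hpoly : ∃ N, ∀ j : ℕ, N ≤ j → hilbertFunction A I j = macaulaySum (n + 1) m j) :
    ∃ N₀, ∀ N, N₀ ≤ N → ∑ t ∈ Finset.range N,
      (hilbertFunction A (I ⊔ Ideal.span {l}) t - lexHilbert n (fun i => m (i + 1)) t)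
        = m 0 - m 1 := by
  obtain ⟨N, hN⟩ := hpoly
  refine ⟨max N (max (m 0) (m 1)).toNat + 1, fun j hj => ?_⟩
  obtain ⟨j, rfl⟩ := Nat.exists_eq_add_of_le' (Nat.one_le_of_lt hj)
  have le_succ (i : ℕ) : m i ≤ j + 1 := by
    obtain _ | i := i
    · omega
    · have := hm1 i
      omega
  have h := hilbertFunction_sub_lexHilbert hI hl hreg hm (n := n) j
  rw [hN j (by omega), lexHilbert_eq_macaulaySum hn le_succ] at h
  omega

/- The differences `g t` between the Hilbert function of the hyperplane section and its lower bound
are nonnegative, sum up to `m 0 - m 1`, and remain zero once they vanish in a degree `≥ m 1`. If the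
bound for `I` is attained in a degree `j ≥ m 0`, this sum is already reached at `j`, and there are
too many degrees between `m 1` and `j` for `g` to be positive in all of them. -/
theorem GotzmannBound.of_sup_span_singleton [GradedAlgebra A] [∀ i, FiniteDimensional K (A i)]
    (hI : I.IsHomogeneous A) {l : R} (hl : l ∈ A 1) (hreg : IsSMulRegular (R ⧸ I) l)
    (hm : ∀ i, n < i → m i = 0)
    (hpoly : ∃ N, ∀ j : ℕ, N ≤ j → hilbertFunction A I j = macaulaySum (n + 1) m j)
    (hJ : GotzmannBound A n (fun i => m (i + 1)) (I ⊔ Ideal.span {l})) :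
    GotzmannBound A (n + 1) m I := by
  have tail_antitone : Antitone fun i => m (i + 1) := antitone_nat_of_succ_le hJ.succ_le
  have tail_nonneg (i : ℕ) : 0 ≤ m (i + 1) :=
    (hm (max i n + 1) (by omega)).ge.trans (tail_antitone (le_max_left i n))
  let g : ℕ → ℤ := fun t =>
    hilbertFunction A (I ⊔ Ideal.span {l}) t - lexHilbert n (fun i => m (i + 1)) t
  have g_nonneg (t : ℕ) : 0 ≤ g t := sub_nonneg.mpr (hJ.lexHilbert_le t)
  have g_persistence (j : ℕ) (hj : m 1 ≤ j) (hgj : g j = 0) (i : ℕ) (hi : j ≤ i) : g i = 0 :=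
    sub_eq_zero.mpr (hJ.persistence j hj (sub_eq_zero.mp hgj) i hi).2
  have sub_eq (j : ℕ) : hilbertFunction A I j - lexHilbert (n + 1) m j
      = ∑ t ∈ Finset.range (j + 1), g t
        - (((j : ℤ) + 1 - m 1).toNat - ((j : ℤ) + 1 - m 0).toNat) :=
    hilbertFunction_sub_lexHilbert hI hl hreg tail_nonneg j
  obtain ⟨N₀, sum_eq⟩ := exists_sum_hilbertFunction_sub_lexHilbert_eq hI hl hreg tail_nonneg
    (hm _ n.lt_succ_self) (fun i => tail_antitone i.zero_le) hpoly
  have m1_le_m0 : m 1 ≤ m 0 := sub_nonneg.mp (sum_eq N₀ le_rfl ▸ Finset.sum_nonneg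
    fun t _ => g_nonneg t)
  refine ⟨fun i => ?_, fun j => ?_, fun j hj heq => ?_⟩
  · obtain _ | i := i
    · exact m1_le_m0
    · exact hJ.succ_le i
  · have := toNat_sub_toNat_le_sum_range g_nonneg (tail_nonneg 0) g_persistence sum_eq (j + 1)
    have := sub_eq j
    push_cast at *
    omega
  · have eq_iff (i : ℕ) (hi : j ≤ i) : hilbertFunction A I i = lexHilbert (n + 1) m i
        ↔ ∑ t ∈ Finset.range (i + 1), g t = m 0 - m 1 := by
      have := sub_eq i
      omega
    obtain ⟨i₀, hi₀, hmi₀, hgi₀⟩ := exists_eq_zero_of_sum_range_eq g_nonneg (tail_nonneg 0)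
      (by push_cast; omega) ((eq_iff j le_rfl).mp heq)
    refine fun i hi => ⟨gradedPart_succ_le_mul_of_sup_span_singleton A hI hl hreg
      (hJ.persistence i₀ hmi₀ (sub_eq_zero.mp hgi₀) i (by omega)).1, ?_⟩
    rw [eq_iff i hi, ← (eq_iff j le_rfl).mp heq]
    exact Finset.eventually_constant_sum
      (fun t ht => g_persistence i₀ hmi₀ hgi₀ t (by omega)) (by omega)

end GotzmannBound

section Macaulay

theorem gotzmannBound_of_eventually_eq {K R : Type*} [Field K] [Infinite K] [CommRing R]
    [IsNoetherianRing R] [Algebra K R] {A : ℕ → Submodule K R} [GradedAlgebra A]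
    [∀ i, FiniteDimensional K (A i)] (hstd : ∀ i, A (i + 1) ≤ A 1 * A i) {n : ℕ} {m : ℕ → ℤ}
    (hm : ∀ i, n ≤ i → m i = 0) {I : Ideal R} (hI : I.IsHomogeneous A)
    (hpoly : ∃ N, ∀ j : ℕ, N ≤ j → hilbertFunction A I j = macaulaySum n m j) :
    GotzmannBound A n m I := by
  induction n generalizing m I with
  | zero => exact (gotzmannBound_top hstd fun i => hm i i.zero_le).of_le le_top
  | succ n ih =>
    obtain ⟨N, hN⟩ := hpoly
    obtain ⟨I', hI', hle, hsat, N', hN'⟩ := exists_isSaturated hstd hI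
    obtain ⟨l, hl, hreg⟩ := exists_isSMulRegular_of_isSaturated hsat
    have poly_I' (j : ℕ) (hj : max N N' ≤ j) :
        hilbertFunction A I' j = macaulaySum (n + 1) m j := by
      rw [hilbertFunction_congr A (hN' j (by omega)), hN j (by omega)]
    have poly_section (j : ℕ) (hj : max N N' + 1 ≤ j) :
        hilbertFunction A (I' ⊔ Ideal.span {l}) j = macaulaySum n (fun i => m (i + 1)) j := by
      obtain ⟨j, rfl⟩ := Nat.exists_eq_add_of_le' (Nat.one_le_of_lt hj)
      rw [hilbertFunction_sup_span_singleton_add A hI' hl hreg, poly_I' _ (by omega),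
        poly_I' _ (by omega), Nat.cast_succ, macaulaySum_succ_sub_macaulaySum]
    have bound_section := ih (fun i hi => hm (i + 1) (by omega))
      (isHomogeneous_sup_span_singleton A hI' hl) ⟨_, poly_section⟩
    exact (bound_section.of_sup_span_singleton hI' hl hreg hm ⟨_, poly_I'⟩).of_le hle

section BaseChange

open scoped TensorProduct

variable {k R : Type*} [Field k] [CommRing R] [Algebra k R] (K : Type*) [Field K] [Algebra k K]
  (V : Submodule k R)

theorem finrank_baseChange_submodule :
    Module.finrank K (V.baseChange K) = Module.finrank k V := by
  rw [← (Submodule.toBaseChange.toLinearEquiv K V).finrank_eq, Module.finrank_baseChange]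

instance finiteDimensional_baseChange [FiniteDimensional k V] :
    FiniteDimensional K (V.baseChange K) :=
  (Submodule.toBaseChange.toLinearEquiv K V).finiteDimensional

variable {V}

theorem adjoin_baseChange_eq_top (hV : Algebra.adjoin k (V : Set R) = ⊤) :
    Algebra.adjoin K (V.baseChange K : Set (K ⊗[k] R)) = ⊤ := by
  rw [← Algebra.TensorProduct.adjoin_one_tmul_image_eq_top (A := K) _ hV,
    Submodule.baseChange_eq_span, Algebra.adjoin_span]
  rfl

theorem isNoetherianRing_of_adjoin_eq_top [FiniteDimensional k V]
    (hV : Algebra.adjoin k (V : Set R) = ⊤) : IsNoetherianRing R := by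
  obtain ⟨s, hs⟩ := (Submodule.fg_iff_finiteDimensional V).mpr inferInstance
  have : Algebra.FiniteType k R := ⟨s, by rw [← hV, ← hs, Algebra.adjoin_span]⟩
  exact Algebra.FiniteType.isNoetherianRing k R

end BaseChange

theorem antitone_of_eventually_finrank_eq {k R : Type*} [Field k] [CommRing R] [Algebra k R]
    {A : ℕ → Submodule k R} [GradedAlgebra A] [∀ i, FiniteDimensional k (A i)]
    (hgen : Algebra.adjoin k (A 1 : Set R) = ⊤) {n : ℕ} {m : ℕ → ℤ} (hm : ∀ i, n ≤ i → m i = 0)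
    (hpoly : ∃ N, ∀ j : ℕ, N ≤ j → (Module.finrank k (A j) : ℤ) = macaulaySum n m j) :
    Antitone m := by
  let K := AlgebraicClosure k
  let B (i : ℕ) := (A i).baseChange K
  have gen_B := adjoin_baseChange_eq_top K hgen
  have : IsNoetherianRing (TensorProduct k K R) := isNoetherianRing_of_adjoin_eq_top gen_B
  have : Infinite K := IsAlgClosed.instInfinite
  have poly_B : ∃ N, ∀ j : ℕ, N ≤ j → hilbertFunction B ⊥ j = macaulaySum n m j := by
    simpa only [hilbertFunction_bot, B, finrank_baseChange_submodule] using hpoly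
  exact antitone_nat_of_succ_le (gotzmannBound_of_eventually_eq (graded_succ_le_mul B gen_B) hm
    (Ideal.IsHomogeneous.bot B) poly_B).succ_le

end Macaulay

section QuotientGrading

variable {K R : Type*} [Field K] [CommRing R] [Algebra K R] (A : ℕ → Submodule K R)
  (I : Ideal R)

theorem adjoin_quotientGrading_one (hgen : Algebra.adjoin K (A 1 : Set R) = ⊤) :
    Algebra.adjoin K (quotientGrading A I 1 : Set (R ⧸ I)) = ⊤ := by
  have coe_eq_image : (quotientGrading A I 1 : Set (R ⧸ I))
      = Ideal.Quotient.mkₐ K I '' (A 1 : Set R) := rfl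
  rw [coe_eq_image, ← AlgHom.map_adjoin, hgen, Algebra.map_top, AlgHom.range_eq_top]
  exact Ideal.Quotient.mkₐ_surjective K I

variable [GradedAlgebra A]

instance gradedMonoid_quotientGrading : SetLike.GradedMonoid (quotientGrading A I) where
  one_mem := ⟨1, SetLike.GradedOne.one_mem, map_one (Ideal.Quotient.mkₐ K I)⟩
  mul_mem := by
    rintro i j _ _ ⟨x, hx, rfl⟩ ⟨y, hy, rfl⟩
    exact ⟨x * y, SetLike.mul_mem_graded hx hy, map_mul (Ideal.Quotient.mkₐ K I) x y⟩

variable {I}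

theorem isInternal_quotientGrading (hI : I.IsHomogeneous A) :
    DirectSum.IsInternal (quotientGrading A I) := by
  classical
  let q (i : ℕ) : A i →ₗ[K] quotientGrading A I i :=
    (Ideal.Quotient.mkₐ K I).toLinearMap.submoduleMap (A i)
  have lmap_surjective : Function.Surjective (DirectSum.lmap q) :=
    (DirectSum.lmap_surjective q).mpr fun i => LinearMap.submoduleMap_surjective _ (A i)
  have coe_lmap (x : R) : DirectSum.coeLinearMap (quotientGrading A I)
      (DirectSum.lmap q (DirectSum.decompose A x)) = Ideal.Quotient.mk I x := by
    induction x using DirectSum.Decomposition.inductionOn A with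
    | zero => simp only [DirectSum.decompose_zero, map_zero]
    | homogeneous x =>
      rw [DirectSum.decompose_coe, DirectSum.lmap_of, DirectSum.coeLinearMap_of]
      rfl
    | add x y hx hy => rw [DirectSum.decompose_add, map_add, map_add, map_add, hx, hy]
  constructor
  · refine (injective_iff_map_eq_zero _).mpr fun w hw => ?_
    obtain ⟨z, rfl⟩ := lmap_surjective w
    obtain ⟨x, rfl⟩ := (DirectSum.decompose A).surjective z
    have hx : x ∈ I := Ideal.Quotient.eq_zero_iff_mem.mp ((coe_lmap x).symm.trans hw)
    ext i
    exact Ideal.Quotient.eq_zero_iff_mem.mpr (hI i hx)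
  · intro y
    obtain ⟨x, rfl⟩ := Ideal.Quotient.mk_surjective y
    exact ⟨_, coe_lmap x⟩

end QuotientGrading

theorem isHilbertPolynomial_of_quotientGrading {K R : Type} [Field K] [CommRing R] [Algebra K R]
    (A : ℕ → Submodule K R) [GradedAlgebra A] (hgen : Algebra.adjoin K (A 1 : Set R) = ⊤)
    {I : Ideal R} (hI : I.IsHomogeneous A)
    (hfin : ∀ j, FiniteDimensional K (quotientGrading A I j)) {f : ℚ[X]}
    (hf : ∃ N, ∀ j : ℕ, N ≤ j → (hilbertFunction A I j : ℚ) = f.eval (j : ℚ)) :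
    IsHilbertPolynomial f :=
  ⟨K, R ⧸ I, inferInstance, inferInstance, inferInstance, quotientGrading A I,
    (isInternal_quotientGrading A hI).gradedAlgebra, hfin, adjoin_quotientGrading_one A I hgen, hf⟩

section MonomialIdeal

open MvPolynomial

attribute [local instance] MvPolynomial.gradedAlgebra

variable {σ : Type*} (K : Type*) [Field K] {C : Set (σ →₀ ℕ)} (hC : IsLowerSet C)

theorem adjoin_homogeneousSubmodule_one :
    Algebra.adjoin K (homogeneousSubmodule σ K 1 : Set (MvPolynomial σ K)) = ⊤ := by
  rw [eq_top_iff, ← adjoin_range_X]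
  refine Algebra.adjoin_mono ?_
  rintro _ ⟨i, rfl⟩
  exact isHomogeneous_X K i

theorem homogeneousSubmodule_eq_restrictSupport (j : ℕ) :
    homogeneousSubmodule σ K j = restrictSupport K {α | α.degree = j} :=
  homogeneousSubmodule_eq_finsupp_supported σ K j

/-- The ideal spanned by the monomials whose exponents lie outside the lower set `C`; the
monomials with exponents in `C` form a basis of the quotient. -/
noncomputable abbrev monomialIdeal : Ideal (MvPolynomial σ K) := restrictSupportIdeal K Cᶜ hC.compl

variable {K}

theorem mem_monomialIdeal_iff {p : MvPolynomial σ K} :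
    p ∈ monomialIdeal K hC ↔ ∀ α ∈ C, p.coeff α = 0 := by
  change (p.support : Set (σ →₀ ℕ)) ⊆ Cᶜ ↔ _
  rw [Set.subset_compl_comm]
  simp only [Set.subset_def, Set.mem_compl_iff, Finset.mem_coe, MvPolynomial.notMem_support_iff]

variable (K)

theorem isHomogeneous_monomialIdeal :
    (monomialIdeal K hC).IsHomogeneous (homogeneousSubmodule σ K) := by
  classical
  intro j p hp
  have decompose_eq : (DirectSum.decompose (homogeneousSubmodule σ K) p j : MvPolynomial σ K)
      = homogeneousComponent j p := decomposition.decompose'_apply p j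
  rw [decompose_eq, mem_monomialIdeal_iff]
  intro α hα
  rw [coeff_homogeneousComponent, (mem_monomialIdeal_iff hC).mp hp α hα, ite_self]

theorem quotientGrading_monomialIdeal (j : ℕ) :
    quotientGrading (homogeneousSubmodule σ K) (monomialIdeal K hC) j
      = (restrictSupport K {α ∈ C | α.degree = j}).map
        (Ideal.Quotient.mkₐ K (monomialIdeal K hC)).toLinearMap := by
  rw [quotientGrading, homogeneousSubmodule_eq_restrictSupport]
  refine le_antisymm ?_ (Submodule.map_mono (restrictSupport_mono K fun α hα => hα.2))
  rw [restrictSupport_eq_span, Submodule.map_span_le]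
  rintro _ ⟨α, hα, rfl⟩
  by_cases hαC : α ∈ C
  · exact Submodule.mem_map_of_mem ((monomial_mem_restrictSupport K).mpr (.inl ⟨hαC, hα⟩))
  · have mem : monomial α (1 : K) ∈ monomialIdeal K hC :=
      (monomial_mem_restrictSupport K).mpr (.inl hαC)
    have map_eq_zero := (Ideal.Quotient.eq_zero_iff_mem (I := monomialIdeal K hC)).mpr mem
    exact map_eq_zero ▸ zero_mem _

theorem finiteDimensional_quotientGrading_monomialIdeal {j : ℕ}
    (hfin : {α ∈ C | α.degree = j}.Finite) :
    FiniteDimensional K (quotientGrading (homogeneousSubmodule σ K) (monomialIdeal K hC) j) := by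
  have := hfin.to_subtype
  have := Module.Finite.of_basis (basisRestrictSupport K {α ∈ C | α.degree = j})
  rw [quotientGrading_monomialIdeal]
  infer_instance

theorem hilbertFunction_monomialIdeal {j : ℕ} (hfin : {α ∈ C | α.degree = j}.Finite) :
    hilbertFunction (homogeneousSubmodule σ K) (monomialIdeal K hC) j
      = {α ∈ C | α.degree = j}.ncard := by
  have := hfin.to_subtype
  let b := basisRestrictSupport K {α ∈ C | α.degree = j}
  have := Module.Finite.of_basis b
  have inf_eq_bot : restrictSupport K {α ∈ C | α.degree = j}
      ⊓ (monomialIdeal K hC).restrictScalars K = ⊥ := by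
    refine eq_bot_iff.mpr fun p hp => MvPolynomial.ext _ _ fun α => ?_
    by_cases hα : α ∈ C
    · exact (mem_monomialIdeal_iff hC).mp hp.2 α hα
    · exact MvPolynomial.notMem_support_iff.mp fun h => hα (hp.1 h).1
  have rank_nullity := finrank_map_add_inf_ker
    (Ideal.Quotient.mkₐ K (monomialIdeal K hC)).toLinearMap
    (restrictSupport K {α ∈ C | α.degree = j})
  rw [ker_mkₐ_toLinearMap, inf_eq_bot, finrank_bot, add_zero] at rank_nullity
  rw [hilbertFunction, quotientGrading_monomialIdeal, rank_nullity,
    Module.finrank_eq_nat_card_basis b, Nat.card_coe_set_eq]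

theorem isHilbertPolynomial_of_isLowerSet {σ : Type} {C : Set (σ →₀ ℕ)} (hC : IsLowerSet C)
    (hfin : ∀ j, {α ∈ C | α.degree = j}.Finite) {f : ℚ[X]}
    (hf : ∃ N, ∀ j : ℕ, N ≤ j → ({α ∈ C | α.degree = j}.ncard : ℚ) = f.eval (j : ℚ)) :
    IsHilbertPolynomial f := by
  refine isHilbertPolynomial_of_quotientGrading (homogeneousSubmodule σ ℚ)
    (adjoin_homogeneousSubmodule_one ℚ) (isHomogeneous_monomialIdeal ℚ hC)
    (fun j => finiteDimensional_quotientGrading_monomialIdeal ℚ hC (hfin j)) ?_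
  obtain ⟨N, hN⟩ := hf
  refine ⟨N, fun j hj => ?_⟩
  rw [hilbertFunction_monomialIdeal ℚ hC (hfin j), Int.cast_natCast, hN j hj]

end MonomialIdeal

section ColexSegment

open Finsupp

/-- The exponents of degree `j` of the monomials obtained from the monomial with exponent `γ` by
multiplying it by a monomial in the variables `0, …, p`. -/
noncomputable def monomialCone (γ : ℕ →₀ ℕ) (p j : ℕ) : Finset (ℕ →₀ ℕ) :=
  if γ.degree ≤ j then
    ((Finset.range (p + 1)).finsuppAntidiag (j - γ.degree)).map (addLeftEmbedding γ)
  else ∅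

theorem mem_monomialCone {γ α : ℕ →₀ ℕ} {p j : ℕ} :
    α ∈ monomialCone γ p j ↔ γ ≤ α ∧ (∀ k, p < k → α k = γ k) ∧ α.degree = j := by
  rw [monomialCone]
  constructor
  · intro hα
    split_ifs at hα with hj
    · obtain ⟨β, hβ, rfl⟩ := Finset.mem_map.mp hα
      obtain ⟨degree_β, support_β⟩ := Finset.mem_finsuppAntidiag'.mp hβ
      have degree_β : β.degree = j - γ.degree := degree_β
      refine ⟨le_self_add, fun k hk => ?_, ?_⟩
      · have hkβ : β k = 0 := notMem_support_iff.mp fun h => by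
          have := Finset.mem_range.mp (support_β h)
          omega
        rw [addLeftEmbedding_apply, Finsupp.add_apply, hkβ, add_zero]
      · rw [addLeftEmbedding_apply, map_add, degree_β]
        omega
    · exact absurd hα (Finset.notMem_empty α)
  · rintro ⟨hγα, hα, rfl⟩
    obtain ⟨β, rfl⟩ := exists_add_of_le hγα
    rw [map_add, if_pos le_self_add, Nat.add_sub_cancel_left]
    refine Finset.mem_map.mpr ⟨β, Finset.mem_finsuppAntidiag'.mpr ⟨rfl, fun k hk => ?_⟩, rfl⟩
    by_contra hkp
    have hkβ := hα k (by simpa using hkp)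
    exact mem_support_iff.mp hk (by simpa using hkβ)

theorem card_monomialCone (γ : ℕ →₀ ℕ) {p : ℕ} (hp : 0 < p) (j : ℕ) :
    ((monomialCone γ p j).card : ℤ) = coneHilbert p γ.degree j := by
  rw [monomialCone, coneHilbert]
  split_ifs with hj
  · rw [Finset.card_map, Finset.card_finsuppAntidiag_nat_eq_choose, Finset.card_range,
      Nat.add_right_comm, Nat.add_sub_cancel, ← Nat.choose_symm_add]
    congr 2
    omega
  · rw [Finset.card_empty, Nat.choose_eq_zero_of_lt (by omega)]

theorem mem_monomialCone_filter_lt {ε α : ℕ →₀ ℕ} {p q j : ℕ} (hpq : p ≤ q) :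
    α ∈ monomialCone (ε.filter (p < ·)) q j
      ↔ (∀ k, p < k → ε k ≤ α k) ∧ (∀ k, q < k → α k = ε k) ∧ α.degree = j := by
  rw [mem_monomialCone]
  refine and_congr (forall_congr' fun k => ?_) (and_congr_left' (forall₂_congr fun k hk => ?_))
  · rw [filter_apply]
    split_ifs with hk <;> simp [hk]
  · rw [filter_apply_pos _ _ (hpq.trans_lt hk)]

/-- The exponents of degree `j` whose last entry different from that of `ε` is the entry at
`p + 1`, where they are smaller than `ε`. -/
noncomputable def colexBlock (ε : ℕ →₀ ℕ) (j p : ℕ) : Finset (ℕ →₀ ℕ) :=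
  monomialCone (ε.filter (p + 1 < ·)) (p + 1) j \ monomialCone (ε.filter (p < ·)) (p + 1) j

theorem mem_colexBlock {ε α : ℕ →₀ ℕ} {j p : ℕ} : α ∈ colexBlock ε j p
    ↔ α (p + 1) < ε (p + 1) ∧ (∀ k, p + 1 < k → α k = ε k) ∧ α.degree = j := by
  rw [colexBlock, Finset.mem_sdiff, mem_monomialCone_filter_lt le_rfl,
    mem_monomialCone_filter_lt p.le_succ]
  constructor
  · rintro ⟨⟨hle, heq, hj⟩, hnot⟩
    refine ⟨?_, heq, hj⟩
    by_contra! hp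
    refine hnot ⟨fun k hk => ?_, heq, hj⟩
    obtain rfl | hk := (Nat.succ_le_of_lt hk).eq_or_lt
    · exact hp
    · exact hle k hk
  · rintro ⟨hlt, heq, hj⟩
    exact ⟨⟨fun k hk => (heq k hk).ge, heq, hj⟩, fun h => hlt.not_ge (h.1 _ p.lt_succ_self)⟩

theorem card_colexBlock (ε : ℕ →₀ ℕ) (j p : ℕ) :
    ((colexBlock ε j p).card : ℤ)
      = coneHilbert (p + 1) (ε.filter (p + 1 < ·)).degree j
        - coneHilbert (p + 1) (ε.filter (p < ·)).degree j := by
  have subset : monomialCone (ε.filter (p < ·)) (p + 1) j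
      ⊆ monomialCone (ε.filter (p + 1 < ·)) (p + 1) j := by
    intro α hα
    obtain ⟨hle, hα⟩ := (mem_monomialCone_filter_lt p.le_succ).mp hα
    exact (mem_monomialCone_filter_lt le_rfl).mpr ⟨fun k hk => hle k (p.lt_succ_self.trans hk), hα⟩
  rw [colexBlock, Finset.card_sdiff_of_subset subset, Nat.cast_sub (Finset.card_le_card subset),
    card_monomialCone _ p.succ_pos, card_monomialCone _ p.succ_pos]

theorem pairwiseDisjoint_colexBlock (ε : ℕ →₀ ℕ) (j : ℕ) (s : Set ℕ) :
    s.PairwiseDisjoint (colexBlock ε j) := by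
  intro p _ q _ hpq
  refine Finset.disjoint_left.mpr fun α hp hq => ?_
  obtain ⟨hαp, hp, -⟩ := mem_colexBlock.mp hp
  obtain ⟨hαq, hq, -⟩ := mem_colexBlock.mp hq
  rcases hpq.lt_or_gt with h | h
  · exact hαq.ne (hp (q + 1) (Nat.succ_lt_succ h))
  · exact hαp.ne (hq (p + 1) (Nat.succ_lt_succ h))

variable {ε : ℕ →₀ ℕ} {n : ℕ}

theorem setOf_toColex_lt_eq_biUnion (h0 : ε 0 = 0) (hn : ∀ k, n < k → ε k = 0) (j : ℕ) :
    {α | toColex α < toColex ε ∧ α.degree = j} = (Finset.range n).biUnion (colexBlock ε j) := by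
  ext α
  simp only [Set.mem_ofPred_eq, Finset.mem_coe, Finset.mem_biUnion, Finset.mem_range,
    mem_colexBlock, Colex.lt_iff]
  constructor
  · rintro ⟨⟨k, heq, hlt⟩, hj⟩
    have hk : ε k ≠ 0 := fun h => (Nat.not_lt_zero _) (h ▸ hlt)
    obtain _ | p := k
    · exact absurd h0 hk
    · exact ⟨p, not_le.mp fun hp => hk (hn _ (Nat.lt_succ_of_le hp)), hlt, heq, hj⟩
  · rintro ⟨p, -, hlt, heq, hj⟩
    exact ⟨⟨p + 1, heq, hlt⟩, hj⟩

theorem ncard_setOf_toColex_lt (h0 : ε 0 = 0) (hn : ∀ k, n < k → ε k = 0) (j : ℕ) :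
    ({α | toColex α < toColex ε ∧ α.degree = j}.ncard : ℤ)
      = lexHilbert n (fun i => (ε.filter (i < ·)).degree) j := by
  rw [setOf_toColex_lt_eq_biUnion h0 hn, Set.ncard_coe_finset,
    Finset.card_biUnion (pairwiseDisjoint_colexBlock ε j _), Nat.cast_sum]
  exact Finset.sum_congr rfl fun i _ => card_colexBlock ε j i

theorem degree_filter_lt (ε : ℕ →₀ ℕ) (i : ℕ) :
    (ε.filter (i < ·)).degree = ε (i + 1) + (ε.filter (i + 1 < ·)).degree := by
  have split : ε.filter (i < ·) = single (i + 1) (ε (i + 1)) + ε.filter (i + 1 < ·) := by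
    ext k
    simp only [Finsupp.add_apply, filter_apply, single_apply]
    grind
  rw [split, map_add, degree_single]

theorem exists_degree_filter_eq {m : ℕ → ℤ} (hm : Antitone m) (hn : ∀ i, n ≤ i → m i = 0) :
    ∃ ε : ℕ →₀ ℕ, ε 0 = 0 ∧ (∀ k, n < k → ε k = 0) ∧
      ∀ i, ((ε.filter (i < ·)).degree : ℤ) = m i := by
  let f (k : ℕ) : ℕ := (m (k - 1) - m k).toNat
  have f_eq_zero (k : ℕ) (hk : n < k) : f k = 0 := by
    simp [f, hn k hk.le, hn (k - 1) (by omega)]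
  let ε : ℕ →₀ ℕ := onFinset (Finset.range (n + 1)) f fun k hk =>
    Finset.mem_range_succ_iff.mpr (not_lt.mp fun hnk => hk (f_eq_zero k hnk))
  have ε_succ (i : ℕ) : (ε (i + 1) : ℤ) = m i - m (i + 1) :=
    Int.toNat_of_nonneg (sub_nonneg.mpr (hm i.le_succ))
  have degree_eq (d : ℕ) : ∀ i, n ≤ i + d → ((ε.filter (i < ·)).degree : ℤ) = m i := by
    induction d with
    | zero =>
      intro i hi
      rw [hn i hi, (filter_eq_zero_iff _ _).mpr fun k hk => f_eq_zero k (by omega)]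
      simp
    | succ d ih =>
      intro i hi
      rw [degree_filter_lt, Nat.cast_add, ih (i + 1) (by omega), ε_succ]
      ring
  exact ⟨ε, by simp [ε, f], f_eq_zero, fun i => degree_eq n i (by omega)⟩

end ColexSegment

theorem isHilbertPolynomial_macaulayPolynomial {n : ℕ} {m : ℕ → ℤ} (hm : Antitone m)
    (hn : ∀ i, n ≤ i → m i = 0) : IsHilbertPolynomial (macaulayPolynomial n m) := by
  obtain ⟨ε, h0, hε, degree_filter⟩ := exists_degree_filter_eq hm hn
  refine isHilbertPolynomial_of_isLowerSet
    ((isLowerSet_Iio (toColex ε)).preimage Finsupp.toColex_monotone)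
    (fun j => (Finset.finite_toSet _).subset (setOf_toColex_lt_eq_biUnion h0 hε j).subset)
    ⟨(m 0).toNat, fun j hj => ?_⟩
  have card_eq := ncard_setOf_toColex_lt h0 hε j
  simp only [degree_filter] at card_eq
  rw [lexHilbert_eq_macaulaySum (hn n le_rfl) fun i => by have := hm i.zero_le; omega] at card_eq
  rw [← Int.cast_natCast j, macaulayPolynomial_eval, ← card_eq, Int.cast_natCast]
  rfl

theorem isHilbertPolynomial_macaulayPolynomial_iff {n : ℕ} {m : ℕ → ℤ}
    (hm : ∀ i, n ≤ i → m i = 0) :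
    IsHilbertPolynomial (macaulayPolynomial n m) ↔ Antitone m := by
  refine ⟨?_, fun hanti => isHilbertPolynomial_macaulayPolynomial hanti hm⟩
  rintro ⟨k, R, _, _, _, A, _, hfin, hgen, N, hN⟩
  refine antitone_of_eventually_finrank_eq hgen hm ⟨N, fun j hj => ?_⟩
  have finrank_eq := hN j hj
  rw [← Int.cast_natCast j, macaulayPolynomial_eval] at finrank_eq
  exact_mod_cast finrank_eq

section ExtendByZero

variable {d : ℕ} {m : Fin (d + 1) → ℤ}

theorem extend_val_zero_of_lt {i : ℕ} (hi : d < i) : Function.extend Fin.val m 0 i = 0 :=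
  Function.extend_apply' _ _ _ (not_exists.mpr fun k => (k.is_le.trans_lt hi).ne)

theorem antitone_extend_val_zero_iff :
    Antitone (Function.extend Fin.val m 0) ↔ Antitone m ∧ 0 ≤ m (Fin.last d) := by
  have extend_val (i : Fin (d + 1)) : Function.extend Fin.val m 0 (i : ℕ) = m i :=
    Fin.val_injective.extend_apply m 0 i
  constructor
  · intro h
    refine ⟨fun i j hij => ?_, ?_⟩
    · simpa only [extend_val] using h (Fin.val_le_of_le hij)
    · rw [← extend_val, ← extend_val_zero_of_lt d.lt_succ_self (m := m)]
      exact h d.le_succ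
  · rintro ⟨hm, hlast⟩ i j hij
    by_cases hj : j < d + 1
    · rw [extend_val ⟨j, hj⟩, extend_val ⟨i, hij.trans_lt hj⟩]
      exact hm hij
    · rw [extend_val_zero_of_lt (not_lt.mp hj)]
      by_cases hi : i < d + 1
      · rw [extend_val ⟨i, hi⟩]
        exact hlast.trans (hm (Fin.le_last _))
      · rw [extend_val_zero_of_lt (not_lt.mp hi)]

end ExtendByZero

theorem sign_patterns_stmt11 (f : Polynomial ℚ) (d : ℕ) (hf : f ≠ 0)
    (hdeg : f.natDegree = d) (hint : ∀ n : ℤ, ∃ z : ℤ, f.eval (n : ℚ) = (z : ℚ))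
    (m : Fin (d + 1) → ℤ)
    (hm : f = ∑ i : Fin (d + 1),
        ((binomPoly ((i : ℕ) + 1)).comp (Polynomial.X + Polynomial.C ((i : ℕ) : ℚ))
          - (binomPoly ((i : ℕ) + 1)).comp
              (Polynomial.X + Polynomial.C ((i : ℕ) : ℚ) - Polynomial.C ((m i : ℚ))))) :
    IsHilbertPolynomial f ↔ (Antitone m ∧ 0 ≤ m (Fin.last d)) := by
  have f_eq : f = macaulayPolynomial (d + 1) (Function.extend Fin.val m 0) := by
    simp only [hm, macaulayPolynomial, Finset.sum_range, Fin.val_injective.extend_apply]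
  rw [f_eq, isHilbertPolynomial_macaulayPolynomial_iff fun i => extend_val_zero_of_lt,
    antitone_extend_val_zero_iff]
end

section
/- For every positive integer d, the polynomial 5·(d·x^d − x^{d-1} − x^{d-2} − ⋯ − x − 1), which equals (5x − 5)·(d·x^{d-1} + (d-1)·x^{d-2} + ⋯ + 2·x + 1), is a Hilbert polynomial. -/
open Polynomial

/-!
A finite-dimensional subspace `V` of a commutative algebra generates the standard graded algebra
`⨁ i, V ^ i`. The Hilbert polynomials obtained in this way are closed under sums (use `V × W` in the
product algebra) and products (use the image of `V ⊗ W` in the tensor product), so they form a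
subsemiring of `ℚ[X]`.

Put `Y = X + 1`. The plane curve `x ^ a = 1` has Hilbert polynomial `a * Y - a.choose 2`, and adding
constants gives `a * Y - b` for all `b ≤ a.choose 2`. An alternating sum
`b₀ * Y ^ n - b₁ * Y ^ (n - 1) + ⋯` is therefore in the subsemiring as soon as each subtracted
coefficient satisfies `b₂ⱼ₊₁ ≤ b₂ⱼ.choose 2`: pair consecutive terms. The coefficients of
`a * ∏ (Y - r)` are up to sign `a * eⱼ`, and `eⱼ₊₁ ≤ e₁ * eⱼ`, so `2 * e₁ + 1 ≤ a` suffices for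
natural numbers `r`.

Finally `5 * (d * X ^ d - ∑ i < d, X ^ i) = ∑ j < d, 5 * (j + 1) * X ^ j * (X - 1)`, where
`X ^ j * (X - 1) = (Y - 1) ^ j * (Y - 2)` has `e₁ = j + 2` and `2 * (j + 2) + 1 ≤ 5 * (j + 1)`.
-/

section InternalGrading

open DirectSum

variable {ι R : Type*} {A : ι → Type*} [DecidableEq ι] [CommSemiring R]
  [∀ i, AddCommMonoid (A i)] [∀ i, Module R (A i)]

variable (R A) in
/-- The copy of `A i` inside the external direct sum `⨁ i, A i`. These submodules turn the external
direct sum of a graded algebra into an internally graded one. -/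
def lofRange (i : ι) : Submodule R (⨁ i, A i) :=
  LinearMap.range (lof R ι A i)

variable (R A) in
noncomputable instance lofRange.decomposition : Decomposition (lofRange R A) :=
  .ofLinearMap (lofRange R A)
    (toModule R ι _ fun i => lof R ι (fun i => lofRange R A i) i ∘ₗ (lof R ι A i).rangeRestrict)
    (by
      ext i x : 2
      simp only [LinearMap.comp_apply, toModule_lof, LinearMap.id_apply]
      exact coeLinearMap_lof ..)
    (by
      ext i ⟨_, x, rfl⟩ : 2
      simp only [LinearMap.comp_apply, coeLinearMap_lof, toModule_lof, LinearMap.id_apply]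
      rfl)

variable [AddMonoid ι] [GSemiring A]

instance lofRange.gradedMonoid : SetLike.GradedMonoid (lofRange R A) where
  one_mem := ⟨GradedMonoid.GOne.one, rfl⟩
  mul_mem := by
    rintro i j _ _ ⟨x, rfl⟩ ⟨y, rfl⟩
    exact ⟨GradedMonoid.GMul.mul x y, (of_mul_of x y).symm⟩

variable (R A) in
noncomputable instance lofRange.gradedAlgebra [GAlgebra R A] : GradedAlgebra (lofRange R A) where

end InternalGrading

section PowerAlgebra

open DirectSum

variable {k B : Type*} [CommSemiring k] [CommSemiring B] [Algebra k B] (V : Submodule k B)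

theorem lof_mem_adjoin_lofRange_one {i : ℕ} {b : B} (hb : b ∈ V ^ i) :
    lof k ℕ (fun i => ↥(V ^ i)) i ⟨b, hb⟩ ∈
      Algebra.adjoin k (lofRange k (fun i : ℕ => ↥(V ^ i)) 1 : Set (⨁ i : ℕ, ↥(V ^ i))) := by
  induction hb using Submodule.pow_induction_on_left' with
  | algebraMap r => exact Subalgebra.algebraMap_mem _ r
  | add x y i hx hy ihx ihy =>
    have hadd := add_mem ihx ihy
    rwa [← map_add] at hadd
  | mem_mul m hm i x hx ih =>
    have hm' : m ∈ V ^ 1 := by rwa [pow_one]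
    have hm_mem : lof k ℕ (fun i => ↥(V ^ i)) 1 ⟨m, hm'⟩ ∈
        lofRange k (fun i : ℕ => ↥(V ^ i)) 1 := ⟨_, rfl⟩
    convert mul_mem (Algebra.subset_adjoin hm_mem) ih using 1
    refine .trans ?_ (of_mul_of (A := fun i : ℕ => ↥(V ^ i)) ⟨m, hm'⟩ ⟨x, hx⟩).symm
    exact of_eq_of_gradedMonoid_eq (Sigma.subtype_ext (add_comm i 1) rfl)

theorem adjoin_lofRange_one :
    Algebra.adjoin k (lofRange k (fun i : ℕ => ↥(V ^ i)) 1 : Set (⨁ i : ℕ, ↥(V ^ i))) = ⊤ := by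
  refine eq_top_iff.2 fun x hx => ?_
  clear hx
  induction x using DirectSum.induction_on with
  | zero => exact zero_mem _
  | of i x => exact lof_mem_adjoin_lofRange_one V x.2
  | add x y hx hy => exact add_mem hx hy

end PowerAlgebra

section SubmodulePowers

variable {k B C : Type*}

section Semiring

variable [CommSemiring k] [Semiring B] [Semiring C] [Algebra k B] [Algebra k C]

theorem submodule_prod_mul_prod (V V' : Submodule k B) (W W' : Submodule k C) :
    V.prod W * V'.prod W' = (V * V').prod (W * W') := by
  refine le_antisymm (Submodule.mul_le.2 fun x hx y hy =>
    ⟨Submodule.mul_mem_mul hx.1 hy.1, Submodule.mul_mem_mul hx.2 hy.2⟩) ?_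
  rw [LinearMap.prod_eq_sup_map, sup_le_iff, Submodule.map_le_iff_le_comap,
    Submodule.map_le_iff_le_comap, Submodule.mul_le, Submodule.mul_le]
  constructor
  · intro v hv v' hv'
    have hmul : ((v, 0) : B × C) * (v', 0) ∈ V.prod W * V'.prod W' :=
      Submodule.mul_mem_mul ⟨hv, zero_mem W⟩ ⟨hv', zero_mem W'⟩
    simpa using hmul
  · intro w hw w' hw'
    have hmul : ((0, w) : B × C) * (0, w') ∈ V.prod W * V'.prod W' :=
      Submodule.mul_mem_mul ⟨zero_mem V, hw⟩ ⟨zero_mem V', hw'⟩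
    simpa using hmul

/-- The exponent `0` is excluded: `(V × W) ^ 0` is spanned by the single element `(1, 1)`. -/
theorem submodule_prod_pow (V : Submodule k B) (W : Submodule k C) {n : ℕ} (hn : n ≠ 0) :
    V.prod W ^ n = (V ^ n).prod (W ^ n) := by
  induction n, Nat.one_le_iff_ne_zero.2 hn using Nat.le_induction with
  | base => simp only [pow_one]
  | succ n hn ih =>
    rw [pow_succ, ih (by lia), submodule_prod_mul_prod, ← pow_succ, ← pow_succ]

open TensorProduct

theorem map₂_mk_mul_map₂_mk (V V' : Submodule k B) (W W' : Submodule k C) :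
    Submodule.map₂ (mk k B C) V W * Submodule.map₂ (mk k B C) V' W' =
      Submodule.map₂ (mk k B C) (V * V') (W * W') := by
  rw [Submodule.mul_eq_span_mul_set V V', Submodule.mul_eq_span_mul_set W W',
    Submodule.map₂_span_span, Submodule.map₂_eq_span_image2, Submodule.map₂_eq_span_image2,
    Submodule.span_mul_span]
  congr 1
  ext z
  constructor
  · rintro ⟨_, ⟨a, ha, b, hb, rfl⟩, _, ⟨c, hc, d, hd, rfl⟩, rfl⟩
    exact ⟨a * c, Set.mul_mem_mul ha hc, b * d, Set.mul_mem_mul hb hd, by simp⟩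
  · rintro ⟨_, ⟨a, ha, c, hc, rfl⟩, _, ⟨b, hb, d, hd, rfl⟩, rfl⟩
    exact ⟨_, ⟨a, ha, b, hb, rfl⟩, _, ⟨c, hc, d, hd, rfl⟩, by simp⟩

theorem map₂_mk_pow (V : Submodule k B) (W : Submodule k C) (n : ℕ) :
    Submodule.map₂ (mk k B C) V W ^ n = Submodule.map₂ (mk k B C) (V ^ n) (W ^ n) := by
  induction n with
  | zero =>
    simp only [pow_zero, Submodule.one_eq_span, Submodule.map₂_span_span, Set.image2_singleton,
      mk_apply, Algebra.TensorProduct.one_def]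
  | succ n ih => rw [pow_succ, ih, map₂_mk_mul_map₂_mk, ← pow_succ, ← pow_succ]

end Semiring

section Field

variable [Field k] [AddCommGroup B] [AddCommGroup C] [Module k B] [Module k C]

theorem finrank_submodule_prod (V : Submodule k B) (W : Submodule k C)
    [FiniteDimensional k V] [FiniteDimensional k W] :
    Module.finrank k (V.prod W) = Module.finrank k V + Module.finrank k W := by
  have hinj : Function.Injective (V.subtype.prodMap W.subtype) :=
    V.subtype_injective.prodMap W.subtype_injective
  rw [← Module.finrank_prod, ← LinearMap.finrank_range_of_inj hinj, LinearMap.range_prodMap,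
    Submodule.range_subtype, Submodule.range_subtype]

open TensorProduct in
theorem finrank_map₂_mk (V : Submodule k B) (W : Submodule k C) :
    Module.finrank k (Submodule.map₂ (mk k B C) V W) =
      Module.finrank k V * Module.finrank k W := by
  have hinj : Function.Injective (mapIncl V W) :=
    map_injective_of_flat_flat _ _ V.subtype_injective W.subtype_injective
  rw [← range_mapIncl, LinearMap.finrank_range_of_inj hinj, Module.finrank_tensorProduct]

end Field

end SubmodulePowers

/-- `f` is a *power Hilbert polynomial* over `k` if it eventually agrees with `i ↦ dim (V ^ i)` for
a finite-dimensional subspace `V` of a commutative `k`-algebra. Such an `f` is the Hilbert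
polynomial of the algebra `⨁ i, V ^ i`, but no grading has to be carried along. -/
def IsPowerHilbertPolynomial (k : Type) [Field k] (f : ℚ[X]) : Prop :=
  ∃ (B : Type) (_ : CommRing B) (_ : Algebra k B) (V : Submodule k B), V.FG ∧
    ∃ N : ℕ, ∀ i : ℕ, N ≤ i → (Module.finrank k ↥(V ^ i) : ℚ) = f.eval (i : ℚ)

namespace IsPowerHilbertPolynomial

variable {k : Type} [Field k] {f g : ℚ[X]}

theorem isHilbertPolynomial (hf : IsPowerHilbertPolynomial k f) : IsHilbertPolynomial f := by
  obtain ⟨B, _, _, V, hV, N, hN⟩ := hf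
  have hfin (i : ℕ) : FiniteDimensional k ↥(V ^ i) := Module.Finite.iff_fg.2 (hV.pow i)
  have hfinrank (i : ℕ) : Module.finrank k (lofRange k (fun i : ℕ => ↥(V ^ i)) i) =
      Module.finrank k ↥(V ^ i) :=
    LinearMap.finrank_range_of_inj (DirectSum.of_injective i)
  refine ⟨k, DirectSum ℕ fun i => ↥(V ^ i), inferInstance, inferInstance, inferInstance,
    lofRange k fun i => ↥(V ^ i), lofRange.gradedAlgebra k _, fun i => ?_, adjoin_lofRange_one V,
    N, fun i hi => by rw [hfinrank, hN i hi]⟩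
  exact Module.Finite.range _

theorem zero : IsPowerHilbertPolynomial k 0 := by
  refine ⟨k, inferInstance, inferInstance, ⊥, Submodule.fg_bot, 1, fun i hi => ?_⟩
  simp [Submodule.bot_pow (Nat.one_le_iff_ne_zero.1 hi)]

theorem one : IsPowerHilbertPolynomial k 1 := by
  refine ⟨k, inferInstance, inferInstance, 1, ?_, 0, fun i _ => ?_⟩
  · rw [Submodule.one_eq_span]
    exact Submodule.fg_span_singleton 1
  · rw [one_pow, Submodule.one_eq_span, finrank_span_singleton one_ne_zero, eval_one, Nat.cast_one]

theorem add (hf : IsPowerHilbertPolynomial k f) (hg : IsPowerHilbertPolynomial k g) :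
    IsPowerHilbertPolynomial k (f + g) := by
  obtain ⟨B, _, _, V, hV, N, hN⟩ := hf
  obtain ⟨C, _, _, W, hW, M, hM⟩ := hg
  refine ⟨B × C, inferInstance, inferInstance, V.prod W, hV.prod hW, N + M + 1, fun i hi => ?_⟩
  have : FiniteDimensional k ↥(V ^ i) := Module.Finite.iff_fg.2 (hV.pow i)
  have : FiniteDimensional k ↥(W ^ i) := Module.Finite.iff_fg.2 (hW.pow i)
  rw [submodule_prod_pow V W (by lia), finrank_submodule_prod, Nat.cast_add, hN i (by lia),
    hM i (by lia), eval_add]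

theorem mul (hf : IsPowerHilbertPolynomial k f) (hg : IsPowerHilbertPolynomial k g) :
    IsPowerHilbertPolynomial k (f * g) := by
  obtain ⟨B, _, _, V, hV, N, hN⟩ := hf
  obtain ⟨C, _, _, W, hW, M, hM⟩ := hg
  refine ⟨TensorProduct k B C, inferInstance, inferInstance,
    Submodule.map₂ (TensorProduct.mk k B C) V W, hV.map₂ _ hW, N + M, fun i hi => ?_⟩
  rw [map₂_mk_pow, finrank_map₂_mk, Nat.cast_mul, hN i (by lia), hM i (by lia), eval_mul]

end IsPowerHilbertPolynomial

/-- The power Hilbert polynomials over `k`, bundled as a subsemiring of `ℚ[X]`. -/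
def powerHilbertSubsemiring (k : Type) [Field k] : Subsemiring ℚ[X] where
  carrier := {f | IsPowerHilbertPolynomial k f}
  zero_mem' := .zero
  one_mem' := .one
  add_mem' := .add
  mul_mem' := .mul

section PlaneCurve

open scoped Pointwise

theorem finrank_span_image_of_pow (k : Type*) {M : Type*} [Field k] [Monoid M] [DecidableEq M]
    (S : Finset M) (i : ℕ) :
    Module.finrank k ↥(Submodule.span k (MonoidAlgebra.of k M '' S) ^ i) = (S ^ i).card := by
  have hli : LinearIndependent k fun m : ↥(S ^ i) => MonoidAlgebra.of k M m :=
    (MonoidAlgebra.basis M k).linearIndependent.comp _ Subtype.val_injective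
  rw [Submodule.span_pow, ← Set.image_pow, ← Finset.coe_pow, Set.image_eq_range]
  exact (finrank_span_eq_card hli).trans (Fintype.card_coe _)

theorem mem_one_pair_pow {M : Type*} [CommMonoid M] [DecidableEq M] {x y z : M} {i : ℕ} :
    z ∈ ({1, x, y} : Finset M) ^ i ↔ ∃ p q : ℕ, p + q ≤ i ∧ x ^ p * y ^ q = z := by
  induction i generalizing z with
  | zero => simp [eq_comm]
  | succ i ih =>
    simp only [pow_succ, Finset.mem_mul, ih, Finset.mem_insert, Finset.mem_singleton]
    constructor
    · rintro ⟨_, ⟨p, q, hpq, rfl⟩, _, rfl | rfl | rfl, rfl⟩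
      · exact ⟨p, q, by lia, by rw [mul_one]⟩
      · exact ⟨p + 1, q, by lia, by rw [pow_succ, mul_right_comm]⟩
      · exact ⟨p, q + 1, by lia, by rw [pow_succ, mul_assoc]⟩
    · rintro ⟨p, q, hpq, rfl⟩
      rcases hpq.lt_or_eq with hlt | heq
      · exact ⟨_, ⟨p, q, by lia, rfl⟩, 1, .inl rfl, mul_one _⟩
      rcases p with _ | p
      · obtain rfl : q = i + 1 := by lia
        exact ⟨_, ⟨0, i, by lia, rfl⟩, y, .inr (.inr rfl), by rw [pow_succ, mul_assoc]⟩
      · exact ⟨_, ⟨p, q, by lia, rfl⟩, x, .inr (.inl rfl), by rw [pow_succ, mul_right_comm]⟩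

theorem sum_range_tsub_add_choose_two {a n : ℕ} (h : a ≤ n + 1) :
    ∑ p ∈ Finset.range a, (n - p) + a.choose 2 = a * n := by
  rw [Nat.choose_two_right, ← Finset.sum_range_id, ← Finset.sum_add_distrib,
    Finset.sum_congr rfl fun p hp => Nat.sub_add_cancel (by grind), Finset.sum_const,
    Finset.card_range, smul_eq_mul]

/-- The elements `1`, `x = ofAdd (1, 0)` and `y = ofAdd (0, 1)` of the monoid with generators
`x`, `y` and the relation `x ^ a = 1`. In the monoid algebra they span the polynomial functions of
degree at most `1` on the affine plane curve `x ^ a = 1`. -/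
def linearMonomials (a : ℕ) : Finset (Multiplicative (ZMod a × ℕ)) :=
  {1, Multiplicative.ofAdd (1, 0), Multiplicative.ofAdd (0, 1)}

theorem card_linearMonomials_pow (a : ℕ) [NeZero a] (i : ℕ) :
    (linearMonomials a ^ i).card = ∑ p ∈ Finset.range a, (i + 1 - p) := by
  have himage : linearMonomials a ^ i =
      ((Finset.range a).sigma fun p => Finset.range (i + 1 - p)).image
        fun s => Multiplicative.ofAdd ((s.1 : ZMod a), s.2) := by
    ext z
    simp only [linearMonomials, mem_one_pair_pow, Finset.mem_image, Finset.mem_sigma,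
      Finset.mem_range, ← ofAdd_nsmul, ← ofAdd_add, Prod.smul_mk, nsmul_one, smul_zero,
      Prod.mk_add_mk, add_zero, zero_add, Nat.cast_id]
    constructor
    · rintro ⟨p, q, hpq, rfl⟩
      refine ⟨⟨p % a, q⟩, ⟨Nat.mod_lt p (NeZero.pos a), ?_⟩, by rw [ZMod.natCast_mod]⟩
      have := Nat.mod_le p a
      lia
    · rintro ⟨⟨p, q⟩, ⟨_, hq⟩, rfl⟩
      exact ⟨p, q, by lia, rfl⟩
  rw [himage, Finset.card_image_of_injOn, Finset.card_sigma]
  · simp only [Finset.card_range]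
  · rintro ⟨p, q⟩ hs ⟨p', q'⟩ hs' h
    simp only [Finset.coe_sigma, Set.mem_sigma_iff, Finset.coe_range, Set.mem_Iio] at hs hs'
    obtain ⟨hp, rfl⟩ := Prod.ext_iff.1 (Multiplicative.ofAdd.injective h)
    obtain rfl : p = p' := by
      rwa [ZMod.natCast_eq_natCast_iff', Nat.mod_eq_of_lt hs.1, Nat.mod_eq_of_lt hs'.1] at hp
    rfl

end PlaneCurve

section ElementarySymmetric

theorem esymm_cons_succ {R : Type*} [CommSemiring R] (t : R) (r : Multiset R) (j : ℕ) :
    (t ::ₘ r).esymm (j + 1) = r.esymm (j + 1) + t * r.esymm j := by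
  simp only [Multiset.esymm, Multiset.powersetCard_cons, Multiset.map_add, Multiset.sum_add,
    Multiset.map_map, Function.comp_def, Multiset.prod_cons, Multiset.sum_map_mul_left]

theorem esymm_succ_le_sum_mul_esymm {R : Type*} [CommSemiring R] [PartialOrder R]
    [IsOrderedRing R] [CanonicallyOrderedAdd R] (r : Multiset R) (j : ℕ) :
    r.esymm (j + 1) ≤ r.sum * r.esymm j := by
  induction r using Multiset.induction_on generalizing j with
  | empty => simp [Multiset.esymm, Multiset.powersetCard_zero_right]
  | cons t r ih =>
    have hmono : r.esymm j ≤ (t ::ₘ r).esymm j := by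
      cases j with
      | zero => simp [Multiset.esymm]
      | succ j => exact esymm_cons_succ t r j ▸ le_self_add
    calc (t ::ₘ r).esymm (j + 1) = r.esymm (j + 1) + t * r.esymm j := esymm_cons_succ t r j
      _ ≤ r.sum * r.esymm j + t * r.esymm j := add_le_add_left (ih j) _
      _ = (t ::ₘ r).sum * r.esymm j := by rw [Multiset.sum_cons]; ring
      _ ≤ (t ::ₘ r).sum * (t ::ₘ r).esymm j := mul_le_mul_right hmono _

theorem esymm_map_natCast (R : Type*) [CommSemiring R] (r : Multiset ℕ) (j : ℕ) :
    (r.map (Nat.cast : ℕ → R)).esymm j = (r.esymm j : R) := by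
  simp only [Multiset.esymm, Multiset.powersetCard_map, Multiset.map_map, Nat.cast_multiset_sum,
    Nat.cast_multiset_prod, Function.comp_def]

theorem prod_map_sub_natCast {R : Type*} [CommRing R] (y : R) (r : Multiset ℕ) :
    (r.map fun t : ℕ => y - (t : R)).prod =
      ∑ j ∈ Finset.range (r.card + 1), (-1) ^ j * ((r.esymm j : R) * y ^ (r.card - j)) := by
  have hvieta := congrArg (eval y) (Multiset.prod_X_sub_X_eq_sum_esymm (r.map (Nat.cast : ℕ → R)))
  simpa [eval_multiset_prod, eval_finsetSum, esymm_map_natCast] using hvieta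

end ElementarySymmetric

section PowerHilbertPolynomials

variable {k : Type} [Field k]

theorem planeCurve_mem (a : ℕ) :
    ((a : ℚ[X]) * (X + 1) - (a.choose 2 : ℚ[X])) ∈ powerHilbertSubsemiring k := by
  rcases eq_zero_or_neZero a with rfl | _
  · simp [zero_mem]
  refine ⟨MonoidAlgebra k (Multiplicative (ZMod a × ℕ)), inferInstance, inferInstance,
    Submodule.span k (MonoidAlgebra.of k _ '' linearMonomials a),
    Submodule.fg_span (Set.toFinite _), a, fun i hi => ?_⟩
  have hsum := sum_range_tsub_add_choose_two (show a ≤ i + 1 + 1 by lia)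
  rw [finrank_span_image_of_pow, card_linearMonomials_pow, eq_tsub_of_add_eq hsum,
    Nat.cast_sub (hsum ▸ Nat.le_add_left _ _)]
  simp

theorem X_add_one_mem : (X + 1 : ℚ[X]) ∈ powerHilbertSubsemiring k := by
  simpa using planeCurve_mem (k := k) 1

theorem natCast_mul_X_add_one_sub_natCast_mem {a b : ℕ} (hb : b ≤ a.choose 2) :
    ((a : ℚ[X]) * (X + 1) - (b : ℚ[X])) ∈ powerHilbertSubsemiring k := by
  convert add_mem (planeCurve_mem (k := k) a) (natCast_mem _ (a.choose 2 - b)) using 1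
  rw [Nat.cast_sub hb]
  ring

theorem alternating_sum_mem {b : ℕ → ℕ} (hb : ∀ j, b (2 * j + 1) ≤ (b (2 * j)).choose 2) (n : ℕ) :
    ∑ j ∈ Finset.range (n + 1), (-1 : ℚ[X]) ^ j * ((b j : ℚ[X]) * (X + 1) ^ (n - j)) ∈
      powerHilbertSubsemiring k := by
  induction n using Nat.twoStepInduction generalizing b with
  | zero => simp
  | one =>
    convert natCast_mul_X_add_one_sub_natCast_mem (k := k) (hb 0) using 1
    simp [Finset.sum_range_succ, sub_eq_add_neg]
  | more n ih _ =>
    have hhead := mul_mem (pow_mem X_add_one_mem (n + 1))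
      (natCast_mul_X_add_one_sub_natCast_mem (k := k) (hb 0))
    have htail := ih (b := fun j => b (j + 1 + 1)) fun j => hb (j + 1)
    convert add_mem hhead htail using 1
    rw [Finset.sum_range_succ', Finset.sum_range_succ']
    simp only [Nat.add_sub_add_right, tsub_zero, zero_add, mul_zero, pow_succ,
      mul_neg_one, neg_neg, show n + 2 - 1 = n + 1 from rfl]
    ring

theorem mul_le_choose_two_mul {a s e e' : ℕ} (ha : 2 * s + 1 ≤ a) (he : e' ≤ s * e) :
    a * e' ≤ (a * e).choose 2 := by
  rcases e.eq_zero_or_pos with rfl | hpos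
  · simp [Nat.le_zero.1 he]
  rw [Nat.choose_two_right, Nat.le_div_iff_mul_le two_pos, mul_right_comm, mul_assoc, mul_assoc]
  refine Nat.mul_le_mul_left a (?_ : 2 * e' ≤ e * (a * e - 1))
  have hle : 2 * s ≤ a * e - 1 := Nat.le_sub_one_of_lt (by nlinarith)
  nlinarith

theorem natCast_mul_prod_X_add_one_sub_mem {a : ℕ} {r : Multiset ℕ} (ha : 2 * r.sum + 1 ≤ a) :
    (a : ℚ[X]) * (r.map fun t : ℕ => X + 1 - (t : ℚ[X])).prod ∈ powerHilbertSubsemiring k := by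
  convert alternating_sum_mem (k := k) (b := fun j => a * r.esymm j)
    (fun j => mul_le_choose_two_mul ha (esymm_succ_le_sum_mul_esymm r _)) r.card using 1
  rw [prod_map_sub_natCast, Finset.mul_sum]
  refine Finset.sum_congr rfl fun j _ => ?_
  rw [Nat.cast_mul]
  ring

theorem natCast_mul_X_pow_mul_X_sub_one_mem {a j : ℕ} (ha : 2 * (j + 2) + 1 ≤ a) :
    (a : ℚ[X]) * (X ^ j * (X - 1)) ∈ powerHilbertSubsemiring k := by
  convert natCast_mul_prod_X_add_one_sub_mem (k := k) (a := a) (r := 2 ::ₘ .replicate j 1)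
    (by simpa [add_comm] using ha) using 2
  simp only [Multiset.map_cons, Nat.cast_ofNat, Multiset.map_replicate, Nat.cast_one,
    add_sub_cancel_right, Multiset.prod_cons, Multiset.prod_replicate]
  ring

end PowerHilbertPolynomials

theorem natCast_mul_pow_sub_geom_sum {R : Type*} [CommRing R] (x : R) (d : ℕ) :
    (d : R) * x ^ d - ∑ i ∈ Finset.range d, x ^ i =
      ∑ j ∈ Finset.range d, ((j + 1 : ℕ) : R) * (x ^ j * (x - 1)) := by
  induction d with
  | zero => simp
  | succ d ih =>
    rw [Finset.sum_range_succ, Finset.sum_range_succ, ← ih, Nat.cast_add_one]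
    ring

theorem sign_patterns_stmt17_general {m : ℕ} (hm : 5 ≤ m) (d : ℕ) :
    IsHilbertPolynomial (C (m : ℚ) * (C (d : ℚ) * X ^ d - ∑ i ∈ Finset.range d, X ^ i)) := by
  suffices hmem : C (m : ℚ) * (C (d : ℚ) * X ^ d - ∑ i ∈ Finset.range d, X ^ i) ∈
      powerHilbertSubsemiring ℚ from IsPowerHilbertPolynomial.isHilbertPolynomial hmem
  rw [C_eq_natCast, C_eq_natCast, natCast_mul_pow_sub_geom_sum, Finset.mul_sum]
  refine sum_mem fun j _ => ?_
  rw [← mul_assoc, ← Nat.cast_mul]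
  exact natCast_mul_X_pow_mul_X_sub_one_mem (by nlinarith)

theorem sign_patterns_stmt17 (d : ℕ) (hd : 0 < d) :
    IsHilbertPolynomial (Polynomial.C (5 : ℚ) *
      (Polynomial.C (d : ℚ) * Polynomial.X ^ d
        - ∑ i ∈ Finset.range d, Polynomial.X ^ i)) :=
  mod_cast sign_patterns_stmt17_general le_rfl d
end
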